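/- Let κ and λ be infinite cardinals with κ ≤ λ ≤ 2^κ. Then there exist two families C₁ and C₂ of mutually non-homeomorphic compact T₁-spaces of cardinality κ and weight λ such that |C₁| = |C₂| = 2^λ, all spaces in C₁ are scattered, all spaces in C₂ are connected and locally connected, and if κ ≥ 𝔠 (where 𝔠 = 2^{ℵ₀}) then all spaces in C₂ are moreover arcwise connected and locally arcwise connected. -/

import Mathlib

open Cardinal Set Topology

/-- The weight of a topological space: the least cardinality of a basis for its topology. -/
noncomputable def tweight (X : Type) [TopologicalSpace X] : Cardinal :=
  sInf { c : Cardinal | ∃ B : Set (Set X), TopologicalSpace.IsTopologicalBasis B ∧ #B = c }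

/-- A space is scattered if every nonempty subset has a point isolated in that subset. -/
def Scattered (X : Type) [TopologicalSpace X] : Prop :=
  ∀ S : Set X, S.Nonempty → ∃ x ∈ S, ∃ U : Set X, IsOpen U ∧ U ∩ S = {x}

/-- Strong zero-dimensionality: every closed set contained in an open set can be
separated from its complement by an open-closed set. -/
def StronglyZeroDimensional (X : Type) [TopologicalSpace X] : Prop :=
  ∀ A U : Set X, IsClosed A → IsOpen U → A ⊆ U →
    ∃ V : Set X, IsOpen V ∧ IsClosed V ∧ A ⊆ V ∧ V ⊆ U

/-- A space is hereditarily paracompact if every subspace is paracompact. -/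
def HereditarilyParacompact (X : Type) [TopologicalSpace X] : Prop :=
  ∀ S : Set X, ParacompactSpace S

/-- A space is perfectly normal iff it is normal and every closed set is a Gδ-set. -/
def PerfectlyNormal (X : Type) [TopologicalSpace X] : Prop :=
  NormalSpace X ∧ ∀ C : Set X, IsClosed C → IsGδ C

/-- A Hausdorff space is almost discrete iff the complement of some point is discrete. -/
def AlmostDiscrete (X : Type) [TopologicalSpace X] : Prop :=
  T2Space X ∧ ∃ x : X, DiscreteTopology ({x}ᶜ : Set X)

/-- A space is almost metrizable iff it is perfectly normal and the complement of some
point is metrizable. -/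
def AlmostMetrizable (X : Type) [TopologicalSpace X] : Prop :=
  PerfectlyNormal X ∧ ∃ x : X, TopologicalSpace.MetrizableSpace ({x}ᶜ : Set X)

/-- There is a family of `n` pairwise non-homeomorphic spaces, all with property `P`. -/
def ExistsNonHomeoFamily (n : Cardinal) (P : (X : Type) → TopologicalSpace X → Prop) : Prop :=
  ∃ (ι : Type) (F : ι → Type) (t : (i : ι) → TopologicalSpace (F i)),
    #ι = n ∧ (∀ i, P (F i) (t i)) ∧
      ∀ i j, i ≠ j → IsEmpty (@Homeomorph (F i) (F j) (t i) (t j))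

/-- Every family of pairwise non-homeomorphic spaces with property `P` has at most `n`
members. -/
def NonHomeoUpperBound (n : Cardinal) (P : (X : Type) → TopologicalSpace X → Prop) : Prop :=
  ∀ (ι : Type) (F : ι → Type) (t : (i : ι) → TopologicalSpace (F i)),
    (∀ i, P (F i) (t i)) →
    (∀ i j, i ≠ j → IsEmpty (@Homeomorph (F i) (F j) (t i) (t j))) → #ι ≤ n

/-- There are precisely `n` spaces with property `P`, up to homeomorphism. -/
def PreciselyNonHomeo (n : Cardinal) (P : (X : Type) → TopologicalSpace X → Prop) : Prop :=
  ExistsNonHomeoFamily n P ∧ NonHomeoUpperBound n P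

/-- A subset `V` is arcwise connected (within the ambient space) iff any two distinct
points of `V` are joined by an arc, i.e. a homeomorphic embedding of `[0,1]`, whose
image lies in `V`. -/
def IsArcConnectedSet {X : Type} [TopologicalSpace X] (V : Set X) : Prop :=
  ∀ x ∈ V, ∀ y ∈ V, x ≠ y → ∃ f : unitInterval → X,
    Topology.IsEmbedding f ∧ Set.range f ⊆ V ∧ f 0 = x ∧ f 1 = y

/-- A space is arcwise connected iff any two distinct points are joined by an arc. -/
def ArcwiseConnected (X : Type) [TopologicalSpace X] : Prop :=
  ∀ x y : X, x ≠ y → ∃ f : unitInterval → X,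
    Topology.IsEmbedding f ∧ f 0 = x ∧ f 1 = y

/-- A space is locally arcwise connected iff every point has a neighborhood basis
consisting of arcwise connected sets. -/
def LocallyArcwiseConnected (X : Type) [TopologicalSpace X] : Prop :=
  ∀ x : X, ∀ U ∈ nhds x, ∃ V ∈ nhds x, V ⊆ U ∧ IsArcConnectedSet V

/-!
For an independent family `A` of `λ` subsets of `κ`, every set `S` of indices is coded by a compact
scattered space of cardinality `κ` whose points have ranks in `κ ∪ {⊤}`. One point of rank `⊤` has
neighborhoods that meet certain infinite sets of points of rank `a` only for the ranks `a` in a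
finite intersection of sets `A i` with `i ∈ S`. Homeomorphisms preserve the ranks, and by
independence `A i` contains such a finite intersection only if `i ∈ S`, so `S` can be recovered.

The other family is obtained by embedding every scattered space `X` so constructed in a connected
space of the same cardinality and weight in which the points of `X` are topologically recognizable.
If `κ < 𝔠`, two sequences are added to `X`, one of which is eventually contained in every nonempty
open set. If `𝔠 ≤ κ`, infinitely many arcs are attached between any two points of `X`; then the
points of `X` are those without a countable neighborhood base.
-/

universe u

section Character

open Filter

variable {α β : Type u} {l l' : Filter α} {c : Cardinal.{u}}

/-- The filter `l` has character at most `c`: it has a base indexed by a type of cardinality at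
most `c`. For `l = 𝓝 x` this says that the point `x` has character at most `c`. -/
def CharacterLE (l : Filter α) (c : Cardinal.{u}) : Prop :=
  ∃ (ι : Type u) (s : ι → Set α), #ι ≤ c ∧ l.HasBasis (fun _ => True) s

namespace CharacterLE

lemma of_hasBasis {ι : Type u} {p : ι → Prop} {s : ι → Set α} (h : l.HasBasis p s)
    (hp : #{i // p i} ≤ c) : CharacterLE l c :=
  ⟨{i // p i}, fun i => s i, hp, ⟨fun t => by simp [h.mem_iff]⟩⟩

lemma of_isCountablyGenerated [l.IsCountablyGenerated] (hc : ℵ₀ ≤ c) : CharacterLE l c := by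
  obtain ⟨s, hs⟩ := l.exists_antitone_basis
  exact ⟨ULift ℕ, fun n => s n.down, mk_le_aleph0.trans hc,
    ⟨fun t => by simp [hs.mem_iff]⟩⟩

lemma map (h : CharacterLE l c) (f : α → β) : CharacterLE (l.map f) c :=
  let ⟨_, _, hι, hs⟩ := h
  ⟨_, _, hι, hs.map f⟩

lemma comap {l : Filter β} (h : CharacterLE l c) (f : α → β) : CharacterLE (l.comap f) c :=
  let ⟨_, _, hι, hs⟩ := h
  ⟨_, _, hι, hs.comap f⟩

lemma sup (h : CharacterLE l c) (h' : CharacterLE l' c) (hc : ℵ₀ ≤ c) : CharacterLE (l ⊔ l') c :=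
  let ⟨ι, _, hι, hs⟩ := h
  let ⟨ι', _, hι', hs'⟩ := h'
  ⟨ι × ι', _, by simpa using mul_le_of_le hc hι hι', by simpa using hs.sup hs'⟩

lemma inf (h : CharacterLE l c) (h' : CharacterLE l' c) (hc : ℵ₀ ≤ c) : CharacterLE (l ⊓ l') c :=
  let ⟨ι, _, hι, hs⟩ := h
  let ⟨ι', _, hι', hs'⟩ := h'
  ⟨ι × ι', _, by simpa using mul_le_of_le hc hι hι', by simpa using hs.inf hs'⟩

lemma iInf_principal {ι : Type u} (hι : #ι ≤ c) (hc : ℵ₀ ≤ c) (s : ι → Set α) :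
    CharacterLE (⨅ i, 𝓟 (s i)) c := by
  have hfin : #(Finset ι) ≤ c := by
    rcases finite_or_infinite ι with _ | _
    · exact mk_le_aleph0.trans hc
    · rwa [mk_finset_of_infinite]
  refine ⟨Finset ι, fun J => ⋂ i ∈ J, s i, hfin, ⟨fun t => ?_⟩⟩
  simp only [(hasBasis_iInf_principal_finite s).mem_iff, Set.exists_finite_iff_finset,
    Finset.set_biInter_coe, true_and]

lemma cofinite (hα : #α ≤ c) (hc : ℵ₀ ≤ c) : CharacterLE (Filter.cofinite : Filter α) c := by
  have : (Filter.cofinite : Filter α) = ⨅ a, 𝓟 {a}ᶜ := by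
    refine Filter.ext fun s => ?_
    rw [hasBasis_cofinite.mem_iff, (hasBasis_iInf_principal_finite _).mem_iff]
    simp only [← compl_iUnion₂, biUnion_of_singleton]
  exact this ▸ iInf_principal hα hc _

/-- A base with fewer than `#T` members would assign one and the same member to infinitely
many `t`. -/
lemma mk_le {T : Type u} [Infinite T] {U : T → Set α} (h : CharacterLE l c) (hU : ∀ t, U t ∈ l)
    (hfin : ∀ s ∈ l, {t | s ⊆ U t}.Finite) : #T ≤ c := by
  obtain ⟨ι, s, hι, hs⟩ := h
  choose k hk using fun t => hs.mem_iff.1 (hU t)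
  by_contra! hlt
  obtain ⟨i, hi⟩ := exists_infinite_fiber k (hι.trans_lt hlt)
  refine hi.not_finite ((hfin (s i) (hs.mem_of_mem trivial)).subset ?_)
  rintro t rfl
  exact (hk t).2

end CharacterLE

end Character

section Weight

variable {X Z : Type} [TopologicalSpace X] [TopologicalSpace Z] {c : Cardinal}

lemma exists_basis_mk_eq_tweight (X : Type) [TopologicalSpace X] :
    ∃ B : Set (Set X), TopologicalSpace.IsTopologicalBasis B ∧ #B = tweight X :=
  csInf_mem (s := {c | ∃ B : Set (Set X), TopologicalSpace.IsTopologicalBasis B ∧ #B = c})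
    ⟨_, _, TopologicalSpace.isTopologicalBasis_opens, rfl⟩

lemma tweight_le_mk {B : Set (Set X)} (hB : TopologicalSpace.IsTopologicalBasis B) :
    tweight X ≤ #B :=
  csInf_le' ⟨B, hB, rfl⟩

lemma tweight_le_of_isInducing {f : X → Z} (hf : IsInducing f) : tweight X ≤ tweight Z := by
  obtain ⟨B, hB, hc⟩ := exists_basis_mk_eq_tweight Z
  exact (tweight_le_mk (hB.isInducing hf)).trans (mk_image_le.trans hc.le)

lemma characterLE_nhds_tweight (x : X) : CharacterLE (𝓝 x) (tweight X) := by
  obtain ⟨B, hB, hc⟩ := exists_basis_mk_eq_tweight X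
  exact .of_hasBasis hB.nhds_hasBasis ((mk_subtype_le_of_subset fun _ h => h.1).trans hc.le)

lemma tweight_le_of_characterLE (hc : ℵ₀ ≤ c) (hX : #X ≤ c) (h : ∀ x : X, CharacterLE (𝓝 x) c) :
    tweight X ≤ c := by
  choose ι s hι hs using h
  have hB : TopologicalSpace.IsTopologicalBasis
      (range fun k : Σ x, ι x => interior (s k.1 k.2)) := by
    refine TopologicalSpace.isTopologicalBasis_of_isOpen_of_nhds ?_ fun x U hx hU => ?_
    · rintro _ ⟨k, rfl⟩
      exact isOpen_interior
    · obtain ⟨k, -, hk⟩ := (hs x).mem_iff.1 (hU.mem_nhds hx)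
      exact ⟨_, ⟨⟨x, k⟩, rfl⟩, mem_interior_iff_mem_nhds.2 ((hs x).mem_of_mem trivial),
        interior_subset.trans hk⟩
  calc tweight X ≤ #(range fun k : Σ x, ι x => interior (s k.1 k.2)) := tweight_le_mk hB
    _ ≤ #(Σ x, ι x) := mk_range_le
    _ ≤ sum fun _ : X => c := by
      rw [mk_sigma]
      exact sum_le_sum _ _ hι
    _ ≤ c := by
      rw [sum_const, Cardinal.lift_id, Cardinal.lift_id]
      exact mul_le_of_le hc hX le_rfl

end Weight

section Topology

variable {X Y Z W : Type*} [TopologicalSpace X] [TopologicalSpace Y] [TopologicalSpace Z]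
  [TopologicalSpace W]

lemma compactSpace_of_isCompact_compl {K : Set Z} (hK : IsCompact K)
    (h : ∀ U : Set Z, IsOpen U → K ⊆ U → IsCompact Uᶜ) : CompactSpace Z := by
  refine ⟨isCompact_of_finite_subcover fun {ι} U hU hcover => ?_⟩
  classical
  obtain ⟨s, hs⟩ := hK.elim_finite_subcover U hU ((subset_univ _).trans hcover)
  obtain ⟨t, ht⟩ := (h _ (isOpen_biUnion fun i (_ : i ∈ s) => hU i) hs).elim_finite_subcover U hU
    ((subset_univ _).trans hcover)
  refine ⟨s ∪ t, ?_⟩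
  rw [Finset.set_biUnion_union, ← union_compl_self (⋃ i ∈ s, U i)]
  exact union_subset_union_right _ ht

lemma nonempty_homeomorph_of_isEmbedding {i : X → Z} {j : Y → W} (hi : IsEmbedding i)
    (hj : IsEmbedding j) (h : Z ≃ₜ W) (hij : ∀ z, h z ∈ range j ↔ z ∈ range i) :
    Nonempty (X ≃ₜ Y) := by
  have himage : h '' range i = range j := by
    rw [← show h ⁻¹' range j = range i from Set.ext hij, image_preimage_eq _ h.surjective]
  exact ⟨hi.toHomeomorph.trans ((h.image _).trans ((Homeomorph.setCongr himage).trans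
    hj.toHomeomorph.symm))⟩

end Topology

section IndependentFamily

variable {I K T T' : Type u}

/-- A family of sets is independent, here in the weak form that no finite intersection of members
is contained in a further member. -/
def IndependentFamily (A : T → Set I) : Prop :=
  ∀ (J : Finset T), ∀ i ∉ J, ∃ a, (∀ j ∈ J, a ∈ A j) ∧ a ∉ A i

lemma IndependentFamily.comp_injective {A : T → Set I} (hA : IndependentFamily A) {f : T' → T}
    (hf : f.Injective) : IndependentFamily (A ∘ f) := fun J i hi => by
  simpa using hA (J.map ⟨f, hf⟩) (f i) (by simpa [hf.eq_iff] using hi)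

lemma IndependentFamily.preimage_equiv {A : T → Set I} (hA : IndependentFamily A) (e : K ≃ I) :
    IndependentFamily fun t => e ⁻¹' A t := fun J i hi =>
  let ⟨a, ha, hai⟩ := hA J i hi
  ⟨e.symm a, by simpa using ha, by simpa using hai⟩

open Classical in
/-- Hausdorff's construction: a point `(F, 𝓕)` belongs to the set coded by `Y` if the trace of `Y`
on `F` is listed in `𝓕`. -/
lemma independentFamily_trace_mem (I : Type u) [Nonempty I] :
    IndependentFamily fun Y : Set I =>
      {x : Finset I × Finset (Finset I) | x.1.filter (· ∈ Y) ∈ x.2} := by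
  intro J Z hZ
  have hsep : ∀ Y ∈ J, ∃ d, ¬(d ∈ Y ↔ d ∈ Z) := fun Y hY => by
    by_contra! h
    exact hZ (Set.ext h ▸ hY)
  choose! d hd using hsep
  refine ⟨(J.image d, J.image fun Y => (J.image d).filter (· ∈ Y)),
    fun Y hY => show _ ∈ Finset.image _ _ from Finset.mem_image_of_mem _ hY, fun hmem => ?_⟩
  obtain ⟨Y, hY, htrace⟩ := Finset.mem_image.1 hmem
  exact hd Y hY (by simpa [Finset.mem_image_of_mem d hY] using Finset.ext_iff.1 htrace (d Y))

lemma exists_independentFamily [Infinite I] (h : #T ≤ 2 ^ #I) :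
    ∃ A : T → Set I, IndependentFamily A := by
  have hcode : #I = #(Finset I × Finset (Finset I)) := by
    simp [mk_finset_of_infinite, mul_eq_self (aleph0_le_mk I)]
  obtain ⟨e⟩ := Cardinal.eq.1 hcode
  obtain ⟨f⟩ := h.trans_eq (mk_set (α := I)).symm
  exact ⟨_, ((independentFamily_trace_mem I).preimage_equiv e).comp_injective f.injective⟩

end IndependentFamily

section CantorBendixson

open Filter

variable {X Y α : Type*} [TopologicalSpace X] [TopologicalSpace Y] [LinearOrder α] {r r' : X → α}

/-- The (Cantor–Bendixson) rank functions of a scattered space `X`: the rank drops at all other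
points close to a given point `x`, and every value below that of `x` is attained arbitrarily close
to `x`. -/
structure IsCantorBendixsonRank (r : X → α) : Prop where
  eventually_lt : ∀ x, ∀ᶠ y in 𝓝[≠] x, r y < r x
  frequently_eq : ∀ x, ∀ β < r x, ∃ᶠ y in 𝓝 x, r y = β

namespace IsCantorBendixsonRank

lemma comp_homeomorph (hr : IsCantorBendixsonRank r) (h : Y ≃ₜ X) :
    IsCantorBendixsonRank (r ∘ h) where
  eventually_lt y := by
    have := hr.eventually_lt (h y)
    rw [eventually_nhdsWithin_iff, ← h.map_nhds_eq, eventually_map] at this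
    rw [eventually_nhdsWithin_iff]
    exact this.mono fun z hz hne => hz (by simpa using hne)
  frequently_eq y β hβ := by
    have := hr.frequently_eq (h y) β hβ
    rwa [← h.map_nhds_eq, frequently_map] at this

variable [WellFoundedLT α]

/-- At a point violating the inequality with minimal `r'`-value `β`, nearby points of `r`-value `β`
violate it too and have smaller `r'`-value. -/
lemma le (hr : IsCantorBendixsonRank r) (hr' : IsCantorBendixsonRank r') (x : X) :
    r x ≤ r' x := by
  induction hβ : r' x using WellFoundedLT.induction generalizing x with
  | ind β ih =>
    subst hβ
    by_contra! hlt
    obtain ⟨y, hy, hdrop⟩ := ((hr.frequently_eq x _ hlt).and_eventually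
      (eventually_nhdsWithin_iff.1 (hr'.eventually_lt x))).exists
    have hne : y ≠ x := by
      rintro rfl
      exact hlt.ne' hy
    exact (hy.symm.trans_le (ih _ (hdrop hne) y rfl)).not_gt (hdrop hne)

lemma eq (hr : IsCantorBendixsonRank r) (hr' : IsCantorBendixsonRank r') : r = r' :=
  funext fun x => (hr.le hr' x).antisymm (hr'.le hr x)

lemma scattered {X : Type} [TopologicalSpace X] {r : X → α} (hr : IsCantorBendixsonRank r) :
    Scattered X := by
  intro S hS
  obtain ⟨x, hxS, hmin⟩ := exists_minimalFor_of_wellFoundedLT (· ∈ S) r hS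
  obtain ⟨U, hUsub, hU, hxU⟩ := eventually_nhds_iff.1
    (eventually_nhdsWithin_iff.1 (hr.eventually_lt x))
  refine ⟨x, hxS, U, hU, eq_singleton_iff_unique_mem.2 ⟨⟨hxU, hxS⟩, fun y hy => ?_⟩⟩
  by_contra hne
  have hlt := hUsub y hy.1 hne
  exact (hmin hy.2 hlt.le).not_gt hlt

end IsCantorBendixsonRank

end CantorBendixson

lemma ExistsNonHomeoFamily.map {n : Cardinal} {P Q : (X : Type) → TopologicalSpace X → Prop}
    (G : Type → Type) (τ : (X : Type) → TopologicalSpace X → TopologicalSpace (G X))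
    (h : ExistsNonHomeoFamily n P) (hPQ : ∀ X t, P X t → Q (G X) (τ X t))
    (hinj : ∀ X t Y t', P X t → P Y t' → @Homeomorph (G X) (G Y) (τ X t) (τ Y t') →
      Nonempty (@Homeomorph X Y t t')) :
    ExistsNonHomeoFamily n Q := by
  obtain ⟨ι, F, t, hι, hP, hne⟩ := h
  refine ⟨ι, fun i => G (F i), fun i => τ _ (t i), hι, fun i => hPQ _ _ (hP i),
    fun i j hij => ⟨fun g => ?_⟩⟩
  exact not_isEmpty_iff.2 (hinj _ _ _ _ (hP i) (hP j) g) (hne i j hij)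

lemma ExistsNonHomeoFamily.mono {n : Cardinal} {P Q : (X : Type) → TopologicalSpace X → Prop}
    (h : ExistsNonHomeoFamily n P) (hPQ : ∀ X t, P X t → Q X t) : ExistsNonHomeoFamily n Q :=
  h.map id (fun _ t => t) hPQ fun _ _ _ _ _ _ g => ⟨g⟩

section Arcs

variable {X : Type} [TopologicalSpace X]

lemma IsArcConnectedSet.isPreconnected {V : Set X} (h : IsArcConnectedSet V) :
    IsPreconnected V := by
  refine isPreconnected_of_forall_pair fun x hx y hy => ?_
  obtain rfl | hxy := eq_or_ne x y
  · exact ⟨{x}, singleton_subset_iff.2 hx, rfl, rfl, isPreconnected_singleton⟩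
  · obtain ⟨f, hf, hfV, h0, h1⟩ := h x hx y hy hxy
    exact ⟨range f, hfV, ⟨0, h0⟩, ⟨1, h1⟩, isPreconnected_range hf.continuous⟩

lemma isArcConnectedSet_univ_iff : IsArcConnectedSet (univ : Set X) ↔ ArcwiseConnected X := by
  simp [IsArcConnectedSet, ArcwiseConnected]

lemma ArcwiseConnected.connectedSpace [Nonempty X] (h : ArcwiseConnected X) : ConnectedSpace X where
  isPreconnected_univ := (isArcConnectedSet_univ_iff.2 h).isPreconnected
  toNonempty := inferInstance

lemma LocallyArcwiseConnected.locallyConnectedSpace (h : LocallyArcwiseConnected X) :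
    LocallyConnectedSpace X :=
  locallyConnectedSpace_of_connected_bases (fun _ => id)
    (fun x V => V ∈ 𝓝 x ∧ IsArcConnectedSet V)
    (fun x => ⟨fun U => ⟨fun hU => let ⟨V, hV, hVU, harc⟩ := h x U hU; ⟨V, ⟨hV, harc⟩, hVU⟩,
      fun ⟨_, hV, hVU⟩ => Filter.mem_of_superset hV.1 hVU⟩⟩)
    fun _ _ hV => hV.2.isPreconnected

end Arcs

/-! ### Compact scattered spaces -/

/-- The compact scattered space coding a set `S` of indices of the family `A`. For every `a : I`
it has infinitely many nodes of rank `a`, half of which carry the flag `true` and take part in the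
coding; `apex` and `sink` have the greatest rank. -/
inductive CodedTower {I T : Type} (A : T → Set I) (S : Set T) : Type
  | node (a : I) (n : ℕ) (flag : Bool)
  | apex
  | sink

namespace CodedTower

open Filter

variable {I T : Type} {A : T → Set I} {S S' : Set T}

lemma node_injective (a : I) (b : Bool) :
    Function.Injective fun n => (node a n b : CodedTower A S) :=
  fun _ _ h => by simpa using h

/-- The underlying set as a disjoint union, for computing its cardinality. -/
def equivSum : CodedTower A S ≃ (I × ℕ × Bool) ⊕ Bool where
  toFun
    | node a n b => .inl (a, n, b)
    | apex => .inr true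
    | sink => .inr false
  invFun
    | .inl (a, n, b) => node a n b
    | .inr true => apex
    | .inr false => sink
  left_inv x := by cases x <;> rfl
  right_inv x := by rcases x with ⟨a, n, b⟩ | (_ | _) <;> rfl

lemma mk_eq [Infinite I] : #(CodedTower A S) = #I := by
  have hI : ℵ₀ ≤ #I := aleph0_le_mk I
  rw [mk_congr equivSum]
  simpa [mul_aleph0_eq hI] using add_eq_left hI (ofNat_le_aleph0.trans hI)

/-- The nodes whose rank, if they are flagged, lies in `A i`. -/
def coded (i : T) : Set (CodedTower A S) :=
  {x | ∀ a n, x = node a n true → a ∈ A i}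

/-- The Cantor–Bendixson rank, with `⊤` for the greatest rank. -/
def rank : CodedTower A S → WithTop I
  | node a _ _ => a
  | apex => ⊤
  | sink => ⊤

variable [LinearOrder I]

/-- The unflagged nodes of rank below `a`, which accumulate at the nodes of rank `a`. -/
def below (a : I) : Set (CodedTower A S) := {x | ∃ c n, x = node c n false ∧ c < a}

/-- The punctured neighborhoods of `x`, up to finite sets. -/
def core : CodedTower A S → Filter (CodedTower A S)
  | node a _ _ => 𝓟 (below a)
  | apex => ⨅ i : S, 𝓟 (coded i)
  | sink => ⊤

instance : TopologicalSpace (CodedTower A S) :=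
  .mkOfNhds fun x => pure x ⊔ core x ⊓ cofinite

lemma eventually_core_le (x : CodedTower A S) : ∀ᶠ y in core x ⊓ cofinite, core y ≤ core x := by
  cases x with
  | node a n b =>
    refine mem_inf_of_left (mem_principal.2 ?_)
    rintro _ ⟨c, m, rfl, hc⟩
    exact principal_mono.2 fun y ⟨d, k, hy, hd⟩ => ⟨d, k, hy, hd.trans hc⟩
  | apex =>
    refine mem_inf_of_right ((eventually_cofinite_ne sink).mono fun y hy => ?_)
    rcases y with ⟨a, n, b⟩ | _ | _
    · refine le_iInf fun i => principal_mono.2 ?_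
      rintro _ ⟨c, m, rfl, -⟩ d k h
      simp at h
    · exact le_rfl
    · exact absurd rfl hy
  | sink => exact .of_forall fun _ => le_top

lemma nhds_eq (x : CodedTower A S) : 𝓝 x = pure x ⊔ core x ⊓ cofinite := by
  refine TopologicalSpace.nhds_mkOfNhds _ _ (fun x => le_sup_left) fun x s hs => ?_
  refine eventually_sup.2 ⟨hs, ?_⟩
  filter_upwards [hs.2, eventually_core_le x] with y hys hy
  exact ⟨hys, inf_le_inf_right _ hy hs.2⟩

instance : T1Space (CodedTower A S) := by
  refine ⟨fun x => isOpen_compl_iff.1 (isOpen_iff_mem_nhds.2 fun y hy => ?_)⟩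
  rw [nhds_eq]
  exact ⟨hy, mem_inf_of_right (eventually_cofinite_ne x)⟩

lemma nhdsNE_le (x : CodedTower A S) : 𝓝[≠] x ≤ core x ⊓ cofinite := by
  rw [nhdsWithin, nhds_eq, inf_sup_right, ← principal_singleton, inf_principal, inter_compl_self,
    principal_empty, bot_sup_eq]
  exact inf_le_left

lemma cofinite_le_nhds_sink : cofinite ≤ 𝓝 (sink : CodedTower A S) := by
  simp [nhds_eq, core]

instance : CompactSpace (CodedTower A S) :=
  compactSpace_of_isCompact_compl (isCompact_singleton (x := sink)) fun _ hU hsink =>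
    Set.Finite.isCompact (mem_cofinite.1 (cofinite_le_nhds_sink (hU.mem_nhds (hsink rfl))))

lemma isCantorBendixsonRank_rank :
    IsCantorBendixsonRank (rank : CodedTower A S → WithTop I) where
  eventually_lt x := by
    refine nhdsNE_le x ?_
    have htop : ∀ᶠ y : CodedTower A S in cofinite, rank y < ⊤ := by
      filter_upwards [eventually_cofinite_ne apex, eventually_cofinite_ne sink] with y hy hy'
      cases y <;> simp_all [rank]
    cases x with
    | node a n b =>
      refine mem_inf_of_left (mem_principal.2 ?_)
      rintro _ ⟨c, m, rfl, hc⟩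
      exact WithTop.coe_lt_coe.2 hc
    | apex => exact mem_inf_of_right htop
    | sink => exact mem_inf_of_right htop
  frequently_eq x β hβ := by
    lift β to I using hβ.ne_top
    have htendsto : Tendsto (fun n => (node β n false : CodedTower A S)) cofinite (𝓝 x) := by
      rw [nhds_eq]
      refine (tendsto_inf.2 ⟨?_, (node_injective β false).tendsto_cofinite⟩).mono_right
        le_sup_right
      cases x with
      | node a m b =>
        exact tendsto_principal.2 (.of_forall fun n => ⟨β, n, rfl, WithTop.coe_lt_coe.1 hβ⟩)
      | apex =>
        refine tendsto_iInf.2 fun i => tendsto_principal.2 (.of_forall fun n a m h => ?_)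
        simp at h
      | sink => exact tendsto_top
    exact htendsto.frequently (Frequently.of_forall fun n => rfl)

lemma coded_mem_nhds_apex {i : T} (hi : i ∈ S) : coded i ∈ 𝓝 (apex : CodedTower A S) := by
  rw [nhds_eq]
  refine ⟨fun a n h => by simp at h, mem_inf_of_left ?_⟩
  exact mem_iInf_of_mem ⟨i, hi⟩ (mem_principal_self _)

lemma exists_finset_of_mem_nhds {x : CodedTower A S} (hx : rank x = ⊤) {U : Set (CodedTower A S)}
    (hU : U ∈ 𝓝 x) : ∃ J : Finset T, (J : Set T) ⊆ S ∧
      ∀ a, (∀ j ∈ J, a ∈ A j) → ∀ᶠ y in cofinite, rank y = a → y ∈ U := by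
  rw [nhds_eq] at hU
  rcases x with ⟨a, n, b⟩ | _ | _
  · exact absurd hx WithTop.coe_ne_top
  · obtain ⟨V, hV, W, hW, hVW⟩ := mem_inf_iff_superset.1 hU.2
    obtain ⟨J, hJ, hJV⟩ := (hasBasis_iInf_principal_finite _).mem_iff.1 hV
    refine ⟨(hJ.image Subtype.val).toFinset, by simp, fun a ha => ?_⟩
    filter_upwards [hW] with y hyW hy
    refine hVW ⟨hJV (mem_iInter₂.2 fun i hi c m hc => ?_), hyW⟩
    obtain rfl : c = a := WithTop.coe_injective (by simpa [hc, rank] using hy)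
    exact ha i (by simpa using hi)
  · refine ⟨∅, by simp, fun a _ => ?_⟩
    have hUcof : U ∈ cofinite := by simpa [core] using hU.2
    filter_upwards [hUcof] with y hy _ using hy

lemma subset_of_homeomorph [WellFoundedLT I] (hA : IndependentFamily A)
    (h : CodedTower A S ≃ₜ CodedTower A S') : S ⊆ S' := by
  intro i hi
  have hrank (x : CodedTower A S) : rank (h x) = rank x :=
    congrFun ((isCantorBendixsonRank_rank.comp_homeomorph h).eq isCantorBendixsonRank_rank) x
  have hcoded : h.symm ⁻¹' coded i ∈ 𝓝 (h apex) :=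
    h.symm.continuous.continuousAt (by simpa using coded_mem_nhds_apex hi)
  obtain ⟨J, hJ, hJcoded⟩ := exists_finset_of_mem_nhds (hrank apex) hcoded
  by_contra hi'
  obtain ⟨a, haJ, hai⟩ := hA J i fun h => hi' (hJ h)
  obtain ⟨n, hn⟩ := ((h.injective.comp (node_injective a true)).tendsto_cofinite.eventually
    (hJcoded a haJ)).exists
  exact hai (by simpa using hn (hrank _) a n (by simp))

lemma mk_le_tweight [Infinite S] (hA : IndependentFamily A) : #S ≤ tweight (CodedTower A S) := by
  refine (characterLE_nhds_tweight apex).mk_le (U := fun i : S => coded i.1)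
    (fun i => coded_mem_nhds_apex i.2) fun U hU => ?_
  obtain ⟨J, -, hJU⟩ := exists_finset_of_mem_nhds rfl hU
  refine (J.finite_toSet.preimage Subtype.val_injective.injOn).subset fun i hi => ?_
  by_contra hiJ
  obtain ⟨a, haJ, hai⟩ := hA J i hiJ
  obtain ⟨n, hn⟩ := ((node_injective a true).tendsto_cofinite.eventually
    (hJU a haJ)).exists
  exact hai (hi (hn rfl) a n rfl)

lemma tweight_le {c : Cardinal} [Infinite I] (hI : #I ≤ c) (hT : #T ≤ c) :
    tweight (CodedTower A S) ≤ c := by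
  have hc : ℵ₀ ≤ c := (aleph0_le_mk I).trans hI
  have hX : #(CodedTower A S) ≤ c := mk_eq.trans_le hI
  refine tweight_le_of_characterLE hc hX fun x => ?_
  have hcore : CharacterLE (core x) c := by
    cases x with
    | node a n b => exact .of_isCountablyGenerated (l := 𝓟 (below a)) hc
    | apex => exact .iInf_principal ((mk_set_le S).trans hT) hc _
    | sink => exact .of_isCountablyGenerated (l := ⊤) hc
  rw [nhds_eq]
  exact .sup (.of_isCountablyGenerated hc) (hcore.inf (.cofinite hX hc) hc) hc

end CodedTower

lemma exists_scattered_family {κ lam : Cardinal} (hκ : ℵ₀ ≤ κ) (h₁ : κ ≤ lam)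
    (h₂ : lam ≤ 2 ^ κ) :
    ExistsNonHomeoFamily (2 ^ lam) fun X _ =>
      CompactSpace X ∧ T1Space X ∧ #X = κ ∧ tweight X = lam ∧ Scattered X := by
  have hlam : ℵ₀ ≤ lam := hκ.trans h₁
  have hI : #κ.ord.ToType = κ := mk_ord_toType κ
  have : Infinite κ.ord.ToType := infinite_iff.2 (hκ.trans_eq hI.symm)
  have : Infinite lam.out := infinite_iff.2 (by rwa [mk_out])
  have hT : #(lam.out ⊕ lam.out) = lam := by simp [add_eq_self hlam]
  obtain ⟨A, hA⟩ := exists_independentFamily (I := κ.ord.ToType) (T := lam.out ⊕ lam.out)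
    (by rwa [hT, hI])
  let S (s : Set lam.out) : Set (lam.out ⊕ lam.out) := Sum.inl '' s ∪ range Sum.inr
  have hS (s) : lam ≤ #(S s) := calc
    lam = #(range (Sum.inr : lam.out → lam.out ⊕ lam.out)) := by
      rw [mk_range_eq _ Sum.inr_injective, mk_out]
    _ ≤ #(S s) := mk_le_mk_of_subset subset_union_right
  have hSinf (s) : Infinite (S s) := infinite_iff.2 (hlam.trans (hS s))
  refine ⟨Set lam.out, fun s => CodedTower A (S s), fun s => inferInstance, by simp, fun s =>
    ⟨inferInstance, inferInstance, CodedTower.mk_eq.trans hI, le_antisymm ?_ ?_,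
      CodedTower.isCantorBendixsonRank_rank.scattered⟩, fun s s' hne => ⟨fun h => hne ?_⟩⟩
  · exact CodedTower.tweight_le (hI.trans_le h₁) hT.le
  · exact (hS s).trans (CodedTower.mk_le_tweight hA)
  · have hSS : S s = S s' := (CodedTower.subset_of_homeomorph hA h).antisymm
      (CodedTower.subset_of_homeomorph hA h.symm)
    ext x
    simpa [S] using Set.ext_iff.1 hSS (.inl x)

/-! ### Hyperconnected extensions -/

lemma locallyConnectedSpace_of_preirreducibleSpace (X : Type*) [TopologicalSpace X]
    [PreirreducibleSpace X] : LocallyConnectedSpace X :=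
  locallyConnectedSpace_of_connected_bases _ _ nhds_basis_opens fun _ _ hU =>
    (IsPreirreducible.open_subset (t := univ) PreirreducibleSpace.isPreirreducible_univ hU.2
      (subset_univ _)).isPreconnected

/-- A space containing `X`, in which the generic points make any two nonempty open sets meet, while
the markers make the points of `X` recognizable (see `HyperconnectedExtension.IsTame`). -/
inductive HyperconnectedExtension (X : Type) : Type
  | base (x : X)
  | marker (n : ℕ)
  | generic (n : ℕ)

namespace HyperconnectedExtension

open Filter

variable {X Y : Type}

lemma base_injective : Function.Injective (base : X → HyperconnectedExtension X) :=
  fun _ _ h => by simpa using h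

lemma marker_injective : Function.Injective (marker : ℕ → HyperconnectedExtension X) :=
  fun _ _ h => by simpa using h

lemma generic_injective : Function.Injective (generic : ℕ → HyperconnectedExtension X) :=
  fun _ _ h => by simpa using h

/-- The underlying set as a disjoint union, for computing its cardinality. -/
def equivSum : HyperconnectedExtension X ≃ X ⊕ ℕ ⊕ ℕ where
  toFun
    | base x => .inl x
    | marker n => .inr (.inl n)
    | generic n => .inr (.inr n)
  invFun
    | .inl x => base x
    | .inr (.inl n) => marker n
    | .inr (.inr n) => generic n
  left_inv z := by cases z <;> rfl
  right_inv z := by rcases z with x | n | n <;> rfl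

lemma mk_eq [Infinite X] : #(HyperconnectedExtension X) = #X := by
  rw [mk_congr equivSum]
  simpa using add_eq_left (aleph0_le_mk X) (aleph0_le_mk X)

variable [TopologicalSpace X] [TopologicalSpace Y]

/-- The neighborhoods of `z`, up to finitely many generic points. -/
def core : HyperconnectedExtension X → Filter (HyperconnectedExtension X)
  | base x => map base (𝓝 x) ⊔ map marker cofinite
  | marker n => pure (marker n)
  | generic n => pure (generic n)

instance : TopologicalSpace (HyperconnectedExtension X) :=
  .mkOfNhds fun z => core z ⊔ map generic cofinite

lemma nhds_eq (z : HyperconnectedExtension X) : 𝓝 z = core z ⊔ map generic cofinite := by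
  refine TopologicalSpace.nhds_mkOfNhds (fun z => core z ⊔ map generic cofinite) z ?_ ?_
  · rintro (x | n | n)
    · exact le_sup_of_le_left (le_sup_of_le_left (map_mono (pure_le_nhds x)))
    · exact le_sup_left
    · exact le_sup_left
  · intro z s hs
    have hgeneric : ∀ᶠ y in map generic cofinite, s ∈ core y ⊔ map generic cofinite :=
      eventually_map.2 ((eventually_map.1 hs.2).mono fun n hn => ⟨hn, hs.2⟩)
    refine eventually_sup.2 ⟨?_, hgeneric⟩
    cases z with
    | base x =>
      have hbase : ∀ᶠ y in 𝓝 x, base ⁻¹' s ∈ 𝓝 y := eventually_eventually_nhds.2 hs.1.1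
      exact eventually_sup.2 ⟨eventually_map.2 (hbase.mono fun y hy => ⟨⟨hy, hs.1.2⟩, hs.2⟩),
        eventually_map.2 ((eventually_map.1 hs.1.2).mono fun n hn => ⟨hn, hs.2⟩)⟩
    | marker n => exact ⟨hs.1, hs.2⟩
    | generic n => exact ⟨hs.1, hs.2⟩

lemma eventually_generic_mem {U : Set (HyperconnectedExtension X)} (hU : IsOpen U)
    (hne : U.Nonempty) : ∀ᶠ n in cofinite, generic n ∈ U := by
  obtain ⟨z, hz⟩ := hne
  have hmem := hU.mem_nhds hz
  rw [nhds_eq] at hmem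
  exact hmem.2

lemma eventually_marker_mem {x : X} {U : Set (HyperconnectedExtension X)} (hU : U ∈ 𝓝 (base x)) :
    ∀ᶠ n in cofinite, marker n ∈ U := by
  rw [nhds_eq] at hU
  exact hU.1.2

lemma isOpen_range_generic : IsOpen (range generic : Set (HyperconnectedExtension X)) := by
  refine isOpen_iff_mem_nhds.2 ?_
  rintro _ ⟨n, rfl⟩
  rw [nhds_eq]
  exact ⟨mem_range_self n, range_mem_map⟩

lemma isOpen_insert_marker (n : ℕ) :
    IsOpen (insert (marker n) (range generic) : Set (HyperconnectedExtension X)) := by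
  refine isOpen_iff_mem_nhds.2 ?_
  rintro _ (rfl | ⟨m, rfl⟩)
  · rw [nhds_eq]
    exact ⟨mem_insert _ _, mem_of_superset range_mem_map (subset_insert _ _)⟩
  · exact mem_of_superset (isOpen_range_generic.mem_nhds (mem_range_self m)) (subset_insert _ _)

instance : PreirreducibleSpace (HyperconnectedExtension X) where
  isPreirreducible_univ U V hU hV hUne hVne := by
    rw [univ_inter] at hUne hVne ⊢
    obtain ⟨n, hnU, hnV⟩ :=
      ((eventually_generic_mem hU hUne).and (eventually_generic_mem hV hVne)).exists
    exact ⟨generic n, hnU, hnV⟩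

instance : IrreducibleSpace (HyperconnectedExtension X) where
  toNonempty := ⟨generic 0⟩

lemma isEmbedding_base : IsEmbedding (base : X → HyperconnectedExtension X) := by
  refine ⟨isInducing_iff_nhds.2 fun x => ?_, base_injective⟩
  have hdisj {f : ℕ → HyperconnectedExtension X} (hf : ∀ n x, f n ≠ base x) :
      comap base (map f cofinite) = ⊥ :=
    comap_eq_bot_iff_compl_range.2 (mem_map.2 (univ_mem' fun n ⟨x, hx⟩ => hf n x hx.symm))
  rw [nhds_eq, core, comap_sup, comap_sup, comap_map base_injective, hdisj (by simp),
    hdisj (by simp), sup_bot_eq, sup_bot_eq]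

instance [CompactSpace X] [Nonempty X] : CompactSpace (HyperconnectedExtension X) := by
  refine compactSpace_of_isCompact_compl (isCompact_range isEmbedding_base.continuous)
    fun U hU hbase => Set.Finite.isCompact ?_
  obtain ⟨x⟩ := ‹Nonempty X›
  have hx : base x ∈ U := hbase (mem_range_self x)
  have hmarker := eventually_marker_mem (hU.mem_nhds hx)
  have hgeneric := eventually_generic_mem hU ⟨_, hx⟩
  refine ((hmarker.image marker).union (hgeneric.image generic)).subset ?_
  rintro (y | n | n) hy
  · exact absurd (hbase (mem_range_self y)) hy
  · exact .inl (mem_image_of_mem _ hy)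
  · exact .inr (mem_image_of_mem _ hy)

instance [T1Space X] : T1Space (HyperconnectedExtension X) := by
  refine ⟨fun z => isOpen_compl_iff.1 (isOpen_iff_mem_nhds.2 fun y hy => ?_)⟩
  have hfinite {f : ℕ → HyperconnectedExtension X} (hf : Function.Injective f) :
      {z}ᶜ ∈ map f cofinite := hf.tendsto_cofinite (eventually_cofinite_ne z)
  rw [nhds_eq]
  refine ⟨?_, hfinite generic_injective⟩
  cases y with
  | base x =>
    refine ⟨?_, hfinite marker_injective⟩
    cases z with
    | base z =>
      have hxz : x ≠ z := fun h => hy (congrArg base h)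
      exact (eventually_ne_nhds hxz).mono fun w hw h => hw (base_injective h)
    | marker n => exact mem_map.2 (univ_mem' fun _ => by simp)
    | generic n => exact mem_map.2 (univ_mem' fun _ => by simp)
  | marker n => exact hy
  | generic n => exact hy

/-- Some open neighborhood of `z` is almost contained in every nonempty open set. This
topological property singles out the points outside `X`. -/
def IsTame (z : HyperconnectedExtension X) : Prop :=
  ∃ U, IsOpen U ∧ z ∈ U ∧ ∀ V, IsOpen V → V.Nonempty → (U \ V).Finite

lemma IsTame.map_homeomorph {z : HyperconnectedExtension X} (hz : IsTame z)
    (h : HyperconnectedExtension X ≃ₜ HyperconnectedExtension Y) : IsTame (h z) := by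
  obtain ⟨U, hU, hzU, hmin⟩ := hz
  refine ⟨h '' U, h.isOpen_image.2 hU, mem_image_of_mem h hzU, fun V hV hVne => ?_⟩
  rw [← image_preimage_eq V h.surjective, ← image_sdiff h.injective]
  exact (hmin _ (hV.preimage h.continuous) (hVne.preimage h.surjective)).image h

lemma not_isTame_iff_mem_range_base {z : HyperconnectedExtension X} :
    ¬IsTame z ↔ z ∈ range base := by
  cases z with
  | base x =>
    refine iff_of_true ?_ (mem_range_self x)
    rintro ⟨U, hU, hx, hmin⟩
    have hmarker := eventually_marker_mem (hU.mem_nhds hx)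
    have hfinite : {n | marker n ∈ U}.Finite :=
      ((hmin _ isOpen_range_generic (range_nonempty _)).preimage marker_injective.injOn).subset
        fun n hn => ⟨hn, by simp⟩
    exact infinite_of_finite_compl hmarker hfinite
  | marker n =>
    refine iff_of_false (not_not.2 ⟨_, isOpen_insert_marker n, mem_insert _ _, fun V hV hne => ?_⟩)
      (by simp)
    refine (((eventually_generic_mem hV hne).image generic).insert (marker n)).subset ?_
    rintro _ ⟨rfl | ⟨m, rfl⟩, hm⟩
    · exact mem_insert _ _
    · exact .inr (mem_image_of_mem _ hm)
  | generic n =>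
    refine iff_of_false (not_not.2 ⟨_, isOpen_range_generic, mem_range_self n,
      fun V hV hne => ?_⟩) (by simp)
    refine ((eventually_generic_mem hV hne).image generic).subset ?_
    rintro _ ⟨⟨m, rfl⟩, hm⟩
    exact mem_image_of_mem _ hm

lemma nonempty_homeomorph (h : HyperconnectedExtension X ≃ₜ HyperconnectedExtension Y) :
    Nonempty (X ≃ₜ Y) := by
  refine nonempty_homeomorph_of_isEmbedding isEmbedding_base isEmbedding_base h fun z => ?_
  rw [← not_isTame_iff_mem_range_base, ← not_isTame_iff_mem_range_base, not_iff_not]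
  exact ⟨fun hz => by simpa using hz.map_homeomorph h.symm, fun hz => hz.map_homeomorph h⟩

lemma tweight_eq [Infinite X] (hX : #X ≤ tweight X) :
    tweight (HyperconnectedExtension X) = tweight X := by
  have hc : ℵ₀ ≤ tweight X := (aleph0_le_mk X).trans hX
  refine (tweight_le_of_characterLE hc (mk_eq.trans_le hX) fun z => ?_).antisymm
    (tweight_le_of_isInducing isEmbedding_base.isInducing)
  have hseq (f : ℕ → HyperconnectedExtension X) : CharacterLE (map f cofinite) (tweight X) :=
    (CharacterLE.cofinite (mk_le_aleph0.trans hc) hc).map f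
  have hcore : CharacterLE (core z) (tweight X) := by
    cases z with
    | base x => exact ((characterLE_nhds_tweight x).map base).sup (hseq marker) hc
    | marker n => exact .of_isCountablyGenerated (l := pure _) hc
    | generic n => exact .of_isCountablyGenerated (l := pure _) hc
  rw [nhds_eq]
  exact hcore.sup (hseq generic) hc

end HyperconnectedExtension

/-! ### Injective paths -/

section InjectivePaths

variable {Z W : Type*} [TopologicalSpace Z] [TopologicalSpace W] {a b c : Z} {M N : Set Z}

lemma injective_path_trans {γ : Path a b} {γ' : Path b c} (hγ : Function.Injective γ)
    (hγ' : Function.Injective γ') (h : range γ ∩ range γ' ⊆ {b}) :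
    Function.Injective (γ.trans γ') := by
  rw [← injOn_univ, ← union_compl_self {t : unitInterval | (t : ℝ) ≤ 1 / 2},
    injOn_union disjoint_compl_right]
  refine ⟨fun s (hs : (s : ℝ) ≤ 1 / 2) t (ht : (t : ℝ) ≤ 1 / 2) hst => ?_,
    fun s (hs : ¬(s : ℝ) ≤ 1 / 2) t (ht : ¬(t : ℝ) ≤ 1 / 2) hst => ?_,
    fun s (hs : (s : ℝ) ≤ 1 / 2) t (ht : ¬(t : ℝ) ≤ 1 / 2) hst => ?_⟩
  · rw [Path.trans_apply, Path.trans_apply, dif_pos hs, dif_pos ht] at hst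
    simpa [Subtype.ext_iff] using hγ hst
  · rw [Path.trans_apply, Path.trans_apply, dif_neg hs, dif_neg ht] at hst
    simpa [Subtype.ext_iff] using hγ' hst
  · rw [Path.trans_apply, Path.trans_apply, dif_pos hs, dif_neg ht] at hst
    have hb := h ⟨⟨_, hst⟩, mem_range_self _⟩
    have : 2 * (t : ℝ) - 1 = 0 := congrArg Subtype.val (hγ' (hb.trans γ'.source.symm))
    exact ht (by linarith)

/-- The points `a` and `b` are equal or joined by an injective path within `N`. This is a form of
being joined by an arc within `N` that can be checked before `N` is known to be Hausdorff. -/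
def InjJoinedIn (N : Set Z) (a b : Z) : Prop :=
  a ≠ b → ∃ γ : Path a b, Function.Injective γ ∧ range γ ⊆ N

namespace InjJoinedIn

lemma refl (N : Set Z) (a : Z) : InjJoinedIn N a a := fun h => absurd rfl h

lemma mono (h : InjJoinedIn M a b) (hMN : M ⊆ N) : InjJoinedIn N a b := fun hab =>
  let ⟨γ, hγ, hM⟩ := h hab
  ⟨γ, hγ, hM.trans hMN⟩

lemma symm (h : InjJoinedIn N a b) : InjJoinedIn N b a := fun hba =>
  let ⟨γ, hγ, hN⟩ := h hba.symm
  ⟨γ.symm, hγ.comp unitInterval.symm_bijective.injective, γ.symm_range.trans_subset hN⟩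

lemma trans (h : InjJoinedIn M a b) (h' : InjJoinedIn N b c) (hMN : M ∩ N ⊆ {b}) :
    InjJoinedIn (M ∪ N) a c := by
  obtain rfl | hab := eq_or_ne a b
  · exact h'.mono subset_union_right
  obtain rfl | hbc := eq_or_ne b c
  · exact h.mono subset_union_left
  obtain ⟨γ, hγ, hM⟩ := h hab
  obtain ⟨γ', hγ', hN⟩ := h' hbc
  refine fun _ => ⟨γ.trans γ',
    injective_path_trans hγ hγ' ((inter_subset_inter hM hN).trans hMN), ?_⟩
  rw [Path.trans_range]
  exact union_subset_union hM hN

lemma image (h : InjJoinedIn N a b) {f : Z → W} (hf : Continuous f) (hinj : Function.Injective f) :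
    InjJoinedIn (f '' N) (f a) (f b) := fun hab => by
  obtain ⟨γ, hγ, hN⟩ := h (ne_of_apply_ne f hab)
  refine ⟨γ.map hf, hinj.comp hγ, ?_⟩
  rw [Path.map_coe, range_comp]
  exact image_mono hN

lemma unitInterval_uIcc (s t : unitInterval) : InjJoinedIn (uIcc s t) s t := by
  wlog hst : s ≤ t generalizing s t
  · exact uIcc_comm t s ▸ (this t s (le_of_not_ge hst)).symm
  intro hne
  have hdiff : (t : ℝ) - s ≠ 0 := sub_ne_zero.2 fun h => hne (Subtype.ext h).symm
  refine ⟨⟨⟨Icc.convexComb s t, by fun_prop⟩, by simp, by simp⟩, fun u v huv => ?_, ?_⟩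
  · have h : (1 - (u : ℝ)) * s + u * t = (1 - (v : ℝ)) * s + v * t := congrArg Subtype.val huv
    exact Subtype.ext (mul_right_cancel₀ hdiff (by linear_combination h))
  · rintro _ ⟨u, rfl⟩
    exact Icc_subset_uIcc ⟨Icc.le_convexComb hst u, Icc.convexComb_le hst u⟩

end InjJoinedIn

end InjectivePaths

/-! ### Graph extensions -/

/-- The edges of the graph extension of `X`: any two distinct points of `X` are the ends of
infinitely many edges, distinguished by their labels. -/
abbrev Edge (X : Type) : Type := (Bool ↪ X) × ℕ

/-- The two ends of the unit interval. -/
def endpt (b : Bool) : unitInterval := bif b then 1 else 0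

/-- The graph obtained from the set of vertices `X` by attaching a copy of the open unit interval
for each edge. Its topology is that of a one-dimensional complex at interior points of edges, but
a neighborhood of a vertex contains a neighborhood `V` of it in `X` and, but for finitely many
exceptions, all edges with an end in `V`. -/
inductive GraphExtension (X : Type) : Type
  | vertex (x : X)
  | inner (e : Edge X) (t : Ioo (0 : unitInterval) 1)

namespace GraphExtension

open Filter

variable {X Y : Type}

lemma exists_edge {x y : X} (hxy : x ≠ y) (n : ℕ) :
    ∃ e : Edge X, e.1 false = x ∧ e.1 true = y ∧ e.2 = n :=
  ⟨(⟨fun b => bif b then y else x, fun b b' => by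
    cases b <;> cases b' <;> simp [hxy, hxy.symm]⟩, n), rfl, rfl, rfl⟩

lemma exists_edge_notMem {x y : X} (hxy : x ≠ y) {F : Set (Edge X)} (hF : F.Finite) :
    ∃ e ∉ F, e.1 false = x ∧ e.1 true = y := by
  choose e h0 h1 hlabel using exists_edge hxy
  obtain ⟨_, ⟨n, rfl⟩, hn⟩ := (infinite_range_of_injective
    (Function.LeftInverse.injective hlabel)).exists_notMem_finite hF
  exact ⟨e n, hn, h0 n, h1 n⟩

lemma eq_endpt_or_mem_Ioo (t : unitInterval) : (∃ b, t = endpt b) ∨ t ∈ Ioo 0 1 := by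
  rcases eq_or_ne t 0 with rfl | h0
  · exact .inl ⟨false, rfl⟩
  rcases eq_or_ne t 1 with rfl | h1
  · exact .inl ⟨true, rfl⟩
  · exact .inr ⟨unitInterval.pos_iff_ne_zero.2 h0, unitInterval.lt_one_iff_ne_one.2 h1⟩

lemma coe_ne_endpt (t : Ioo (0 : unitInterval) 1) (b : Bool) : (t : unitInterval) ≠ endpt b := by
  cases b
  · exact t.2.1.ne'
  · exact t.2.2.ne

lemma endpt_injective : Function.Injective endpt := by
  intro b b'
  cases b <;> cases b' <;> simp [endpt]

lemma vertex_injective : Function.Injective (vertex : X → GraphExtension X) :=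
  fun _ _ h => by simpa using h

lemma inner_injective (e : Edge X) : Function.Injective (inner e) :=
  fun _ _ h => by simpa using h

/-- The underlying set as a disjoint union, for computing its cardinality. -/
def equivSum : GraphExtension X ≃ X ⊕ Edge X × Ioo (0 : unitInterval) 1 where
  toFun
    | vertex x => .inl x
    | inner e t => .inr (e, t)
  invFun
    | .inl x => vertex x
    | .inr (e, t) => inner e t
  left_inv z := by cases z <;> rfl
  right_inv z := by rcases z with x | ⟨e, t⟩ <;> rfl

lemma mk_edge_le [Infinite X] : #(Edge X) ≤ #X := by
  have hends : #(Bool ↪ X) ≤ #(Bool → X) := mk_le_of_injective DFunLike.coe_injective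
  rw [mk_prod, Cardinal.lift_id, Cardinal.lift_id]
  refine mul_le_of_le (aleph0_le_mk X) (hends.trans ?_) (mk_le_aleph0.trans (aleph0_le_mk X))
  simpa using pow_le (aleph0_le_mk X) (by simp)

lemma mk_eq (hX : continuum ≤ #X) : #(GraphExtension X) = #X := by
  have : Infinite X := infinite_iff.2 (aleph0_le_continuum.trans hX)
  have hIoo : #(Ioo (0 : unitInterval) 1) ≤ #X :=
    (mk_subtype_le _).trans ((mk_subtype_le _).trans (mk_real.trans_le hX))
  rw [mk_congr equivSum, mk_sum, Cardinal.lift_id, Cardinal.lift_id, mk_prod, Cardinal.lift_id,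
    Cardinal.lift_id]
  exact add_eq_left (aleph0_le_mk X) (mul_le_of_le (aleph0_le_mk X) mk_edge_le hIoo)

/-- The closed edge `e`, including its ends. -/
noncomputable def edgeMap (e : Edge X) (t : unitInterval) : GraphExtension X :=
  if ht : t ∈ Ioo 0 1 then inner e ⟨t, ht⟩
  else if t = 0 then vertex (e.1 false) else vertex (e.1 true)

lemma edgeMap_endpt (e : Edge X) (b : Bool) : edgeMap e (endpt b) = vertex (e.1 b) := by
  cases b <;> simp [edgeMap, endpt]

lemma edgeMap_coe (e : Edge X) (t : Ioo (0 : unitInterval) 1) : edgeMap e t = inner e t :=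
  dif_pos t.2

lemma edgeMap_injective (e : Edge X) : Function.Injective (edgeMap e) := by
  intro s t hst
  rcases eq_endpt_or_mem_Ioo s with ⟨b, rfl⟩ | hs <;>
    rcases eq_endpt_or_mem_Ioo t with ⟨b', rfl⟩ | ht
  · rw [edgeMap_endpt, edgeMap_endpt] at hst
    rw [e.1.injective (vertex_injective hst)]
  · simp [edgeMap_endpt, edgeMap_coe e ⟨t, ht⟩] at hst
  · simp [edgeMap_endpt, edgeMap_coe e ⟨s, hs⟩] at hst
  · rw [edgeMap_coe e ⟨s, hs⟩, edgeMap_coe e ⟨t, ht⟩] at hst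
    exact congrArg Subtype.val (inner_injective e hst)

/-- The point at position `t` of the edge `e`, in a representation that singles out the end `b` of
the edge. -/
def ofEnd (p : Edge X × Bool × Ioo (0 : unitInterval) 1) : GraphExtension X := inner p.1 p.2.2

/-- The filter of sets containing the whole edge for all but finitely many edges, and the part
close to the chosen end for the remaining ones. -/
def nearEnd : Filter (Edge X × Bool × Ioo (0 : unitInterval) 1) :=
  comap Prod.fst cofinite ⊔ comap (fun p => dist (p.2.2 : unitInterval) (endpt p.2.1)) (𝓝 0)

/-- The points of `V`, together with the points of the edges with an end in `V`, but only
those at distance less than `ε` of that end for the edges in `F`. -/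
def star (V : Set X) (F : Set (Edge X)) (ε : ℝ) : Set (GraphExtension X) :=
  vertex '' V ∪
    ofEnd '' {p | p.1.1 p.2.1 ∈ V ∧ (p.1 ∈ F → dist (p.2.2 : unitInterval) (endpt p.2.1) < ε)}

variable {V : Set X} {F : Set (Edge X)} {ε : ℝ} {x : X} {e : Edge X}
  {t : Ioo (0 : unitInterval) 1}

lemma vertex_mem_star : vertex x ∈ star V F ε ↔ x ∈ V := by
  simp [star, ofEnd]

lemma inner_mem_star : inner e t ∈ star V F ε ↔
    ∃ b, e.1 b ∈ V ∧ (e ∈ F → dist (t : unitInterval) (endpt b) < ε) := by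
  simp [star, ofEnd]

lemma star_univ_empty : star (Set.univ : Set X) ∅ 1 = Set.univ := by
  refine eq_univ_of_forall fun z => ?_
  cases z with
  | vertex x => exact vertex_mem_star.2 (mem_univ x)
  | inner e t => exact inner_mem_star.2 ⟨false, by simp⟩

/-- The union of the closed edges in `E`; for finite `E` it is a finite graph. -/
def subgraph (E : Set (Edge X)) : Set (GraphExtension X) := ⋃ e ∈ E, range (edgeMap e)

lemma vertex_mem_subgraph {E : Set (Edge X)} :
    vertex x ∈ subgraph E ↔ x ∈ ⋃ e ∈ E, range e.1 := by
  simp only [subgraph, mem_iUnion₂, mem_range]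
  refine exists_congr fun e => exists_congr fun _ => ⟨?_, ?_⟩
  · rintro ⟨t, ht⟩
    rcases eq_endpt_or_mem_Ioo t with ⟨b, rfl⟩ | hIoo
    · exact ⟨b, by simpa [edgeMap_endpt] using ht⟩
    · simp [edgeMap_coe e ⟨t, hIoo⟩] at ht
  · rintro ⟨b, rfl⟩
    exact ⟨endpt b, edgeMap_endpt e b⟩

lemma inner_mem_subgraph {E : Set (Edge X)} : inner e t ∈ subgraph E ↔ e ∈ E := by
  simp only [subgraph, mem_iUnion₂, mem_range]
  refine ⟨?_, fun he => ⟨e, he, t, edgeMap_coe e t⟩⟩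
  rintro ⟨e', he', s, hs⟩
  rcases eq_endpt_or_mem_Ioo s with ⟨b, rfl⟩ | hIoo
  · simp [edgeMap_endpt] at hs
  · rw [edgeMap_coe e' ⟨s, hIoo⟩] at hs
    exact (inner.inj hs).1 ▸ he'

lemma false_of_dist_endpt_lt_half {b b' : Bool} (hb : b ≠ b') {s : unitInterval}
    (h : dist s (endpt b) < 1 / 2) (h' : dist s (endpt b') < 1 / 2) : False := by
  have hone : dist (endpt b) (endpt b') = 1 := by
    cases b <;> cases b' <;> simp_all [endpt, Subtype.dist_eq]
  linarith [dist_triangle_left (endpt b) (endpt b') s]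

/-- The part of the edge `e` between the point at position `t` and the end `b`. -/
def leg (e : Edge X) (b : Bool) (t : unitInterval) : Set (GraphExtension X) :=
  edgeMap e '' uIcc t (endpt b)

lemma subgraph_inter_subgraph_subset {E E' : Set (Edge X)} (h : Disjoint E E') :
    subgraph E ∩ subgraph E' ⊆ range vertex := by
  rintro (x | ⟨e, t⟩) ⟨hE, hE'⟩
  · exact mem_range_self x
  · exact absurd (inner_mem_subgraph.1 hE') (disjoint_left.1 h (inner_mem_subgraph.1 hE))

lemma subgraph_mono {E E' : Set (Edge X)} (h : E ⊆ E') : subgraph E ⊆ subgraph E' :=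
  biUnion_subset_biUnion_left h

lemma range_edgeMap_subset_subgraph {E : Set (Edge X)} (he : e ∈ E) :
    range (edgeMap e) ⊆ subgraph E :=
  subset_biUnion_of_mem (u := fun e => range (edgeMap e)) he

lemma leg_subset_subgraph {E : Set (Edge X)} (he : e ∈ E) (b : Bool) (t : unitInterval) :
    leg e b t ⊆ subgraph E :=
  (image_subset_range _ _).trans (range_edgeMap_subset_subgraph he)

lemma uIcc_endpt_false (t : unitInterval) : uIcc t (endpt false) = Iic t :=
  (uIcc_of_ge unitInterval.nonneg').trans (Icc_bot (a := t))

lemma uIcc_endpt_true (t : unitInterval) : uIcc t (endpt true) = Ici t :=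
  (uIcc_of_le unitInterval.le_one').trans (Icc_top (a := t))

lemma other_endpt_notMem_uIcc {b : Bool} {t : unitInterval} (ht : t ≠ endpt !b) :
    endpt (!b) ∉ uIcc t (endpt b) := by
  cases b
  · rw [uIcc_endpt_false, mem_Iic, not_le]
    exact unitInterval.lt_one_iff_ne_one.2 ht
  · rw [uIcc_endpt_true, mem_Ici, not_le]
    exact unitInterval.pos_iff_ne_zero.2 ht

lemma eq_endpt_or_mem_Ioo_of_mem_uIcc {b : Bool} {s t : unitInterval} (ht : t ≠ endpt !b)
    (hs : s ∈ uIcc t (endpt b)) : s = endpt b ∨ s ∈ Ioo 0 1 := by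
  refine (eq_endpt_or_mem_Ioo s).imp_left ?_
  rintro ⟨b', rfl⟩
  rcases Bool.eq_or_eq_not b' b with rfl | rfl
  · rfl
  · exact absurd hs (other_endpt_notMem_uIcc ht)

lemma leg_inter_range_vertex_subset {b : Bool} {t : unitInterval} (ht : t ≠ endpt !b) :
    leg e b t ∩ range vertex ⊆ {vertex (e.1 b)} := by
  rintro _ ⟨⟨s, hs, rfl⟩, x, hx⟩
  rcases eq_endpt_or_mem_Ioo_of_mem_uIcc ht hs with rfl | hIoo
  · exact edgeMap_endpt e b
  · simp [edgeMap_coe e ⟨s, hIoo⟩] at hx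

lemma disjoint_uIcc_endpt {b b' : Bool} {t t' : unitInterval} (h : t' ∉ uIcc t (endpt b))
    (h' : t ∉ uIcc t' (endpt b')) : Disjoint (uIcc t (endpt b)) (uIcc t' (endpt b')) := by
  cases b <;> cases b' <;>
    simp only [uIcc_endpt_false, uIcc_endpt_true, mem_Iic, mem_Ici, not_le] at h h' ⊢
  · exact absurd h h'.not_gt
  · exact (Iic_disjoint_Ici.2 h.not_ge)
  · exact (Iic_disjoint_Ici.2 h.not_ge).symm
  · exact absurd h h'.not_gt

lemma leg_inter_leg_subset {e e' : Edge X} {b b' : Bool} {t t' : unitInterval}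
    (h : edgeMap e' t' ∉ leg e b t) (h' : edgeMap e t ∉ leg e' b' t') :
    leg e b t ∩ leg e' b' t' ⊆ range vertex := by
  rcases eq_or_ne e e' with rfl | he
  · rw [leg, (edgeMap_injective e).mem_set_image] at h h'
    rw [leg, leg, ← image_inter (edgeMap_injective e), (disjoint_uIcc_endpt h h').inter_eq,
      image_empty]
    exact empty_subset _
  · exact (inter_subset_inter (leg_subset_subgraph (mem_singleton e) b t)
      (leg_subset_subgraph (mem_singleton e') b' t')).trans
      (subgraph_inter_subgraph_subset (disjoint_singleton.2 he))

lemma leg_subset_star {b : Bool} {t : unitInterval} (hb : e.1 b ∈ V) (ht : t ≠ endpt !b)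
    (hdist : e ∈ F → dist t (endpt b) < ε) : leg e b t ⊆ star V F ε := by
  rintro _ ⟨s, hs, rfl⟩
  rcases eq_endpt_or_mem_Ioo_of_mem_uIcc ht hs with rfl | hIoo
  · exact edgeMap_endpt e b ▸ vertex_mem_star.2 hb
  · refine edgeMap_coe e ⟨s, hIoo⟩ ▸
      inner_mem_star.2 ⟨b, hb, fun he => lt_of_le_of_lt ?_ (hdist he)⟩
    exact Real.dist_right_le_of_mem_uIcc (by simpa [mem_uIcc] using hs)

lemma exists_leg_subset_star [Nontrivial X] (hε : 0 < ε) {z : GraphExtension X}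
    (hz : z ∈ star V F ε) : ∃ e b t, z = edgeMap e t ∧ t ≠ endpt !b ∧ e.1 b ∈ V ∧
      leg e b t ⊆ star V F ε := by
  cases z with
  | vertex x =>
    obtain ⟨y, hy⟩ := exists_ne x
    obtain ⟨e, rfl, -, -⟩ := exists_edge hy.symm 0
    have hV := vertex_mem_star.1 hz
    have hne : endpt false ≠ endpt !false := endpt_injective.ne (by simp)
    exact ⟨e, false, endpt false, (edgeMap_endpt e false).symm, hne, hV,
      leg_subset_star hV hne fun _ => by rwa [dist_self]⟩
  | inner e t =>
    obtain ⟨b, hV, hdist⟩ := inner_mem_star.1 hz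
    exact ⟨e, b, t, (edgeMap_coe e t).symm, coe_ne_endpt t _, hV,
      leg_subset_star hV (coe_ne_endpt t _) hdist⟩

variable [TopologicalSpace X] [TopologicalSpace Y]

/-- The neighborhood filters of the graph extension. -/
def nhdFilter : GraphExtension X → Filter (GraphExtension X)
  | vertex x => map vertex (𝓝 x) ⊔ map ofEnd (nearEnd ⊓ comap (fun p => p.1.1 p.2.1) (𝓝 x))
  | inner e t => map (inner e) (𝓝 t)

lemma mem_nhdFilter_vertex {U : Set (GraphExtension X)} : U ∈ nhdFilter (vertex x) ↔
    ∃ V F ε, IsOpen V ∧ x ∈ V ∧ F.Finite ∧ 0 < ε ∧ star V F ε ⊆ U := by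
  constructor
  · rintro ⟨hvertex, hedge⟩
    obtain ⟨A, ⟨hcofinite, hdist⟩, B, hB, hAB⟩ := mem_inf_iff_superset.1 hedge
    obtain ⟨V', hV', hVB⟩ := mem_comap.1 hB
    obtain ⟨V, hV, hVopen, hxV⟩ := mem_nhds_iff.1 (inter_mem hvertex hV')
    obtain ⟨E, hE, hEA⟩ := mem_comap.1 hcofinite
    obtain ⟨D, hD, hDA⟩ := mem_comap.1 hdist
    obtain ⟨ε, hε, hεD⟩ := Metric.mem_nhds_iff.1 hD
    refine ⟨V, Eᶜ, ε, hVopen, hxV, hE, hε, union_subset ?_ ?_⟩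
    · exact image_subset_iff.2 fun y hy => (hV hy).1
    · refine image_subset_iff.2 fun p hp => hAB ⟨?_, hVB (hV hp.1).2⟩
      by_cases hpE : p.1 ∈ E
      · exact hEA hpE
      · exact hDA (hεD (by simpa using hp.2 hpE))
  · rintro ⟨V, F, ε, hV, hx, hF, hε, hU⟩
    refine mem_of_superset ?_ hU
    have hnear : {p : Edge X × Bool × Ioo (0 : unitInterval) 1 |
        p.1 ∈ F → dist (p.2.2 : unitInterval) (endpt p.2.1) < ε} ∈ nearEnd :=
      ⟨mem_of_superset (preimage_mem_comap hF.compl_mem_cofinite) fun p hp hpF => absurd hpF hp,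
        mem_of_superset (preimage_mem_comap (Iio_mem_nhds hε)) fun p hp _ => hp⟩
    have hend := preimage_mem_comap (m := fun p : Edge X × Bool × Ioo (0 : unitInterval) 1 =>
      p.1.1 p.2.1) (hV.mem_nhds hx)
    exact union_mem_sup (image_mem_map (hV.mem_nhds hx))
      (image_mem_map (mem_of_superset (inter_mem_inf hnear hend) fun p hp => ⟨hp.2, hp.1⟩))

lemma star_mem_nhdFilter (hV : IsOpen V) (hF : F.Finite) (hε : 0 < ε) {z : GraphExtension X}
    (hz : z ∈ star V F ε) : star V F ε ∈ nhdFilter z := by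
  cases z with
  | vertex x =>
    exact mem_nhdFilter_vertex.2 ⟨V, F, ε, hV, vertex_mem_star.1 hz, hF, hε, Subset.rfl⟩
  | inner e t =>
    obtain ⟨b, hb, hdist⟩ := inner_mem_star.1 hz
    have hev : ∀ᶠ s : Ioo (0 : unitInterval) 1 in 𝓝 t,
        e ∈ F → dist (s : unitInterval) (endpt b) < ε := by
      by_cases he : e ∈ F
      · have hcont : Continuous fun s : Ioo (0 : unitInterval) 1 =>
          dist (s : unitInterval) (endpt b) := by fun_prop
        exact (hcont.continuousAt.eventually_lt_const (hdist he)).mono fun s hs _ => hs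
      · exact Eventually.of_forall fun s h => absurd h he
    exact hev.mono fun s hs => inner_mem_star.2 ⟨b, hb, hs⟩

instance : TopologicalSpace (GraphExtension X) := .mkOfNhds nhdFilter

lemma nhds_eq (z : GraphExtension X) : 𝓝 z = nhdFilter z := by
  refine TopologicalSpace.nhds_mkOfNhds nhdFilter z ?_ ?_
  · rintro (x | ⟨e, t⟩)
    · exact le_sup_of_le_left (map_mono (pure_le_nhds x))
    · exact map_mono (pure_le_nhds t)
  · intro z s hs
    cases z with
    | vertex x =>
      obtain ⟨V, F, ε, hV, hx, hF, hε, hVs⟩ := mem_nhdFilter_vertex.1 hs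
      refine mem_of_superset (mem_nhdFilter_vertex.2 ⟨V, F, ε, hV, hx, hF, hε, Subset.rfl⟩)
        fun y hy => ?_
      exact mem_of_superset (star_mem_nhdFilter hV hF hε hy) hVs
    | inner e t => exact eventually_map.2 (eventually_eventually_nhds.2 hs)

lemma star_mem_nhds (hV : V ∈ 𝓝 x) (hF : F.Finite) (hε : 0 < ε) :
    star V F ε ∈ 𝓝 (vertex x) := by
  obtain ⟨W, hWV, hW, hxW⟩ := mem_nhds_iff.1 hV
  rw [nhds_eq]
  refine mem_nhdFilter_vertex.2 ⟨W, F, ε, hW, hxW, hF, hε, union_subset_union (image_mono hWV) ?_⟩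
  exact image_mono fun p hp => ⟨hWV hp.1, hp.2⟩

lemma exists_star_subset {U : Set (GraphExtension X)} (hU : U ∈ 𝓝 (vertex x)) :
    ∃ V ∈ 𝓝 x, ∃ F ε, F.Finite ∧ 0 < ε ∧ star V F ε ⊆ U := by
  rw [nhds_eq] at hU
  obtain ⟨V, F, ε, hV, hx, hF, hε, hVU⟩ := mem_nhdFilter_vertex.1 hU
  exact ⟨V, hV.mem_nhds hx, F, ε, hF, hε, hVU⟩

lemma isOpenEmbedding_inner (e : Edge X) : IsOpenEmbedding (inner e) :=
  isOpenEmbedding_iff_continuous_injective_isOpenMap.2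
    ⟨continuous_iff_continuousAt.2 fun t => (nhds_eq (inner e t)).ge, inner_injective e,
      isOpenMap_iff_nhds_le.2 fun t => (nhds_eq (inner e t)).le⟩

lemma isEmbedding_vertex : IsEmbedding (vertex : X → GraphExtension X) := by
  refine ⟨isInducing_iff_nhds.2 fun x => ?_, vertex_injective⟩
  have hdisj {l} : comap vertex (map (ofEnd (X := X)) l) = ⊥ :=
    comap_eq_bot_iff_compl_range.2 (mem_map.2 (univ_mem' fun p => by simp [ofEnd]))
  rw [nhds_eq, nhdFilter, comap_sup, comap_map vertex_injective, hdisj, sup_bot_eq]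

lemma disjoint_nhds_inner {z : GraphExtension X} (hz : z ≠ inner e t) :
    Disjoint (𝓝 z) (𝓝 (inner e t)) := by
  cases z with
  | vertex x =>
    have hpos (b) : 0 < dist (t : unitInterval) (endpt b) := dist_pos.2 (coe_ne_endpt t b)
    obtain ⟨δ, hδ, hδt⟩ : ∃ δ > 0, ∀ b, δ < dist (t : unitInterval) (endpt b) := by
      obtain ⟨δ, hδ, hlt⟩ := exists_between (lt_min (hpos false) (hpos true))
      exact ⟨δ, hδ, Bool.forall_bool.2 (lt_min_iff.1 hlt)⟩
    have hfar : ∀ᶠ s : Ioo (0 : unitInterval) 1 in 𝓝 t,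
        ∀ b, δ < dist (s : unitInterval) (endpt b) := eventually_all.2 fun b =>
      Continuous.continuousAt (by fun_prop) |>.eventually_const_lt (hδt b)
    refine Filter.disjoint_iff.2 ⟨_, star_mem_nhds univ_mem (finite_singleton e) hδ, _,
      (isOpenEmbedding_inner e).image_mem_nhds.2 hfar, ?_⟩
    rw [disjoint_right]
    rintro _ ⟨s, hs, rfl⟩ hstar
    obtain ⟨b, -, hb⟩ := inner_mem_star.1 hstar
    exact (hs b).not_gt (hb rfl)
  | inner e' t' =>
    rw [← (isOpenEmbedding_inner e).map_nhds_eq, ← (isOpenEmbedding_inner e').map_nhds_eq]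
    rcases eq_or_ne e e' with rfl | he
    · exact (disjoint_map (inner_injective e)).2 (disjoint_nhds_nhds.2 (ne_of_apply_ne _ hz))
    · refine Filter.disjoint_iff.2 ⟨_, range_mem_map, _, range_mem_map, ?_⟩
      rw [disjoint_right]
      rintro _ ⟨s, rfl⟩ ⟨s', hs⟩
      exact he (inner.inj hs).1.symm

instance [T1Space X] : T1Space (GraphExtension X) := by
  refine ⟨fun z => isOpen_compl_iff.1 (isOpen_iff_mem_nhds.2 fun y hy => ?_)⟩
  have hdisjoint (h : Disjoint (𝓝 y) (𝓝 z)) : {z}ᶜ ∈ 𝓝 y :=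
    disjoint_principal_right.1 (principal_singleton z ▸ h.mono_right (pure_le_nhds z))
  cases z with
  | inner e t => exact hdisjoint (disjoint_nhds_inner hy)
  | vertex z =>
    cases y with
    | inner e t => exact hdisjoint (disjoint_nhds_inner (Ne.symm hy)).symm
    | vertex x =>
      have hxz : x ≠ z := fun h => hy (congrArg vertex h)
      refine mem_of_superset (star_mem_nhds (compl_singleton_mem_nhds hxz) finite_empty one_pos) ?_
      rintro _ hw rfl
      exact vertex_mem_star.1 hw rfl

lemma tweight_eq (hX : continuum ≤ #X) (hw : #X ≤ tweight X) :
    tweight (GraphExtension X) = tweight X := by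
  have : Infinite X := infinite_iff.2 (aleph0_le_continuum.trans hX)
  have hc : ℵ₀ ≤ tweight X := (aleph0_le_mk X).trans hw
  refine (tweight_le_of_characterLE hc ((mk_eq hX).trans_le hw) fun z => ?_).antisymm
    (tweight_le_of_isInducing isEmbedding_vertex.isInducing)
  rw [nhds_eq]
  cases z with
  | inner e t => exact (CharacterLE.of_isCountablyGenerated hc).map _
  | vertex x =>
    have hx : CharacterLE (𝓝 x) (tweight X) := characterLE_nhds_tweight x
    have hnear : CharacterLE (nearEnd (X := X)) (tweight X) :=
      ((CharacterLE.cofinite (mk_edge_le.trans hw) hc).comap _).sup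
        (.of_isCountablyGenerated hc) hc
    exact (hx.map _).sup ((hnear.inf (hx.comap _) hc).map _) hc

/-- Removing an interior point from an edge with end `x` gives a neighborhood of `vertex x`, and
every neighborhood of `vertex x` is contained in only finitely many of these. -/
lemma not_characterLE_nhds_vertex [T1Space X] [Uncountable X] (x : X) :
    ¬CharacterLE (𝓝 (vertex x)) ℵ₀ := by
  intro h
  have hX : ℵ₀ < #({x}ᶜ : Set X) := by
    rw [mk_compl_of_infinite _ (by simpa using one_lt_aleph0.trans_le (aleph0_le_mk X))]
    exact aleph0_lt_mk
  have : Infinite ({x}ᶜ : Set X) := infinite_iff.2 hX.le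
  choose e hx hy _ using fun y : ({x}ᶜ : Set X) => exists_edge (Ne.symm y.2) 0
  have he : Function.Injective e := fun y y' h => Subtype.ext (by rw [← hy y, ← hy y', h])
  obtain ⟨t⟩ : Nonempty (Ioo (0 : unitInterval) 1) := (nonempty_Ioo.2 zero_lt_one).to_subtype
  refine (CharacterLE.mk_le h (U := fun y => {inner (e y) t}ᶜ)
    (fun y => compl_singleton_mem_nhds (by simp)) fun s hs => ?_).not_gt hX
  obtain ⟨V, hV, F, ε, hF, -, hVs⟩ := exists_star_subset hs
  refine (hF.preimage he.injOn).subset fun y hy => ?_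
  by_contra hyF
  exact hy (hVs (inner_mem_star.2 ⟨false, (hx y).symm ▸ mem_of_mem_nhds hV, fun h => absurd h hyF⟩))
    rfl

lemma not_characterLE_nhds_iff_mem_range_vertex [T1Space X] [Uncountable X]
    {z : GraphExtension X} : ¬CharacterLE (𝓝 z) ℵ₀ ↔ z ∈ range vertex := by
  cases z with
  | vertex x => exact iff_of_true (not_characterLE_nhds_vertex x) (mem_range_self x)
  | inner e t =>
    refine iff_of_false (not_not.2 ?_) (by simp)
    rw [nhds_eq]
    exact (CharacterLE.of_isCountablyGenerated le_rfl).map _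

lemma nonempty_homeomorph [T1Space X] [T1Space Y] [Uncountable X] [Uncountable Y]
    (h : GraphExtension X ≃ₜ GraphExtension Y) : Nonempty (X ≃ₜ Y) := by
  refine nonempty_homeomorph_of_isEmbedding isEmbedding_vertex isEmbedding_vertex h fun z => ?_
  rw [← not_characterLE_nhds_iff_mem_range_vertex, ← not_characterLE_nhds_iff_mem_range_vertex,
    not_iff_not]
  refine ⟨fun hz => ?_, fun hz => h.map_nhds_eq z ▸ hz.map h⟩
  rw [← h.symm_apply_apply z, ← h.symm.map_nhds_eq]
  exact hz.map h.symm

lemma continuous_edgeMap (e : Edge X) : Continuous (edgeMap e) := by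
  refine continuous_iff_continuousAt.2 fun t => ?_
  rcases eq_endpt_or_mem_Ioo t with ⟨b, rfl⟩ | ht
  · intro U hU
    rw [edgeMap_endpt] at hU
    obtain ⟨V, hV, F, ε, -, hε, hVU⟩ := exists_star_subset hU
    rw [mem_map]
    have hne : ∀ᶠ s in 𝓝 (endpt b), s ≠ endpt !b :=
      eventually_ne_nhds (endpt_injective.ne (by simp))
    filter_upwards [Metric.ball_mem_nhds (endpt b) hε, hne] with s hs hsne
    refine hVU ?_
    have hb : e.1 b ∈ V := mem_of_mem_nhds hV
    rcases eq_endpt_or_mem_Ioo s with ⟨b', rfl⟩ | hsIoo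
    · obtain rfl : b' = b := by simpa [endpt_injective.eq_iff] using hsne
      exact edgeMap_endpt e b' ▸ vertex_mem_star.2 hb
    · exact edgeMap_coe e ⟨s, hsIoo⟩ ▸ inner_mem_star.2 ⟨b, hb, fun _ => hs⟩
  · have hcomp : edgeMap e ∘ ((↑) : Ioo (0 : unitInterval) 1 → unitInterval) = inner e :=
      funext (edgeMap_coe e)
    exact (isOpen_Ioo.isOpenEmbedding_subtypeVal.continuousAt_iff (x := ⟨t, ht⟩)).1
      (hcomp ▸ (isOpenEmbedding_inner e).continuous.continuousAt)

instance [CompactSpace X] : CompactSpace (GraphExtension X) := by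
  refine compactSpace_of_isCompact_compl (isCompact_range isEmbedding_vertex.continuous)
    fun U hU hvertex => ?_
  choose V hV F ε hF _ hVU using fun x : X =>
    exists_star_subset (hU.mem_nhds (hvertex (mem_range_self x)))
  obtain ⟨s, -, hs⟩ := isCompact_univ.elim_nhds_subcover V fun x _ => hV x
  refine ((s.finite_toSet.biUnion fun x _ => hF x).isCompact_biUnion
    fun e _ => isCompact_range (continuous_edgeMap e)).of_isClosed_subset hU.isClosed_compl ?_
  rintro (x | ⟨e, t⟩) hz
  · exact absurd (hvertex (mem_range_self x)) hz
  obtain ⟨x, hxs, hx⟩ := mem_iUnion₂.1 (hs (mem_univ (e.1 false)))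
  have heF : e ∈ F x := by
    by_contra he
    exact hz (hVU x (inner_mem_star.2 ⟨false, hx, fun h => absurd h he⟩))
  exact mem_biUnion (mem_biUnion hxs heF) ⟨t, edgeMap_coe e t⟩

/-- Two vertices of a finite graph are separated by the stars consisting of the nearer halves of
the adjacent edges. -/
lemma disjoint_nhdsWithin_vertex [T1Space X] {E : Set (Edge X)} (hE : E.Finite) {x y : X}
    (hxy : x ≠ y) : Disjoint (𝓝[subgraph E] (vertex x)) (𝓝[subgraph E] (vertex y)) := by
  set ends : Set X := ⋃ e ∈ E, range e.1
  have hends : ends.Finite := hE.biUnion fun e _ => finite_range e.1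
  have hstar (w : X) : subgraph E ∩ star (ends \ {w})ᶜ E (1 / 2) ∈ 𝓝[subgraph E] (vertex w) :=
    inter_mem self_mem_nhdsWithin (mem_nhdsWithin_of_mem_nhds (star_mem_nhds
      ((hends.sdiff.isClosed.compl_mem_nhds fun h => h.2 rfl)) hE (by norm_num)))
  have heq {w v : X} (hv : v ∈ ends) (h : v ∈ (ends \ {w})ᶜ) : v = w := by
    simpa [hv] using h
  refine Filter.disjoint_iff.2 ⟨_, hstar x, _, hstar y, disjoint_left.2 ?_⟩
  rintro (v | ⟨e, t⟩) ⟨hz, hx⟩ ⟨-, hy⟩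
  · have hv := vertex_mem_subgraph.1 hz
    exact hxy ((heq hv (vertex_mem_star.1 hx)).symm.trans (heq hv (vertex_mem_star.1 hy)))
  · have he := inner_mem_subgraph.1 hz
    have hmem (b) : e.1 b ∈ ends := mem_biUnion he (mem_range_self b)
    obtain ⟨b, hb, hdist⟩ := inner_mem_star.1 hx
    obtain ⟨b', hb', hdist'⟩ := inner_mem_star.1 hy
    refine false_of_dist_endpt_lt_half ?_ (hdist he) (hdist' he)
    rintro rfl
    exact hxy ((heq (hmem b) hb).symm.trans (heq (hmem b) hb'))

lemma t2Space_subgraph [T1Space X] {E : Set (Edge X)} (hE : E.Finite) :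
    T2Space (subgraph E) := by
  refine t2Space_iff_disjoint_nhds.2 fun z w hzw => ?_
  have hne : (z : GraphExtension X) ≠ w := Subtype.coe_injective.ne hzw
  change Disjoint (𝓝 z) (𝓝 w)
  rw [nhds_subtype_eq_comap_nhdsWithin, nhds_subtype_eq_comap_nhdsWithin]
  refine disjoint_comap ?_
  rcases z with ⟨x | ⟨e, t⟩, _⟩
  · rcases w with ⟨y | ⟨e, t⟩, _⟩
    · exact disjoint_nhdsWithin_vertex hE (ne_of_apply_ne vertex hne)
    · exact (disjoint_nhds_inner hne).mono nhdsWithin_le_nhds nhdsWithin_le_nhds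
  · exact (disjoint_nhds_inner hne.symm).symm.mono nhdsWithin_le_nhds nhdsWithin_le_nhds

lemma isEmbedding_of_range_subset_subgraph [T1Space X] {E : Set (Edge X)} (hE : E.Finite)
    {γ : unitInterval → GraphExtension X} (hγ : Continuous γ) (hinj : Function.Injective γ)
    (hrange : range γ ⊆ subgraph E) : IsEmbedding γ := by
  have := t2Space_subgraph hE
  exact IsEmbedding.subtypeVal.comp
    ((hγ.subtype_mk fun t => hrange (mem_range_self t)).isClosedEmbedding
      fun _ _ h => hinj (congrArg Subtype.val h)).isEmbedding

lemma isArcConnectedSet_of_injJoinedIn [T1Space X] {N : Set (GraphExtension X)}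
    (h : ∀ z ∈ N, ∀ w ∈ N, z ≠ w →
      ∃ E : Set (Edge X), E.Finite ∧ InjJoinedIn (N ∩ subgraph E) z w) :
    IsArcConnectedSet N := by
  intro z hz w hw hzw
  obtain ⟨E, hE, hjoined⟩ := h z hz w hw hzw
  obtain ⟨γ, hγ, hrange⟩ := hjoined hzw
  exact ⟨γ, isEmbedding_of_range_subset_subgraph hE γ.continuous hγ
    (hrange.trans inter_subset_right), hrange.trans inter_subset_left, γ.source, γ.target⟩

lemma injJoinedIn_edgeMap (e : Edge X) (s t : unitInterval) :
    InjJoinedIn (edgeMap e '' uIcc s t) (edgeMap e s) (edgeMap e t) :=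
  (InjJoinedIn.unitInterval_uIcc s t).image (continuous_edgeMap e) (edgeMap_injective e)

lemma injJoinedIn_leg (e : Edge X) (b : Bool) (t : unitInterval) :
    InjJoinedIn (leg e b t) (edgeMap e t) (vertex (e.1 b)) :=
  edgeMap_endpt e b ▸ injJoinedIn_edgeMap e t (endpt b)

lemma injJoinedIn_leg_of_mem {e : Edge X} {b : Bool} {t : unitInterval} {w : GraphExtension X}
    (hw : w ∈ leg e b t) : InjJoinedIn (leg e b t) (edgeMap e t) w := by
  obtain ⟨s, hs, rfl⟩ := hw
  exact (injJoinedIn_edgeMap e t s).mono (image_mono (uIcc_subset_uIcc_left hs))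

lemma exists_injJoinedIn_vertex_vertex {x y : X} (hx : x ∈ V) (hy : y ∈ V) (hF : F.Finite)
    (ε : ℝ) {E : Set (Edge X)} (hE : E.Finite) :
    ∃ M ⊆ star V F ε, ∃ E', E'.Finite ∧ M ⊆ subgraph E' ∧
      M ∩ subgraph E ⊆ range vertex ∧ InjJoinedIn M (vertex x) (vertex y) := by
  obtain rfl | hxy := eq_or_ne x y
  · exact ⟨∅, empty_subset _, ∅, finite_empty, empty_subset _, by simp, .refl _ _⟩
  obtain ⟨e, he, rfl, rfl⟩ := exists_edge_notMem hxy (hE.union hF)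
  rw [mem_union, not_or] at he
  refine ⟨range (edgeMap e), ?_, {e}, finite_singleton e,
    range_edgeMap_subset_subgraph (mem_singleton e), ?_, ?_⟩
  · rintro _ ⟨t, rfl⟩
    rcases eq_endpt_or_mem_Ioo t with ⟨b, rfl⟩ | hIoo
    · rw [edgeMap_endpt, vertex_mem_star]
      cases b
      exacts [hx, hy]
    · exact edgeMap_coe e ⟨t, hIoo⟩ ▸ inner_mem_star.2 ⟨false, hx, fun h => absurd h he.2⟩
  · exact (inter_subset_inter_left _ (range_edgeMap_subset_subgraph (mem_singleton e))).trans
      (subgraph_inter_subgraph_subset (disjoint_singleton_left.2 he.1))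
  · rw [← edgeMap_endpt, ← edgeMap_endpt]
    exact (injJoinedIn_edgeMap e _ _).mono (image_subset_range _ _)

/-- The legs of two points of a star either join them directly or can be connected by an edge
that is contained in the star and meets the legs at its ends only. -/
lemma isArcConnectedSet_star [T1Space X] [Nontrivial X] (V : Set X) (hF : F.Finite) (hε : 0 < ε) :
    IsArcConnectedSet (star V F ε) := by
  refine isArcConnectedSet_of_injJoinedIn fun z hz w hw _ => ?_
  obtain ⟨e, b, t, rfl, ht, hV, hleg⟩ := exists_leg_subset_star hε hz
  obtain ⟨e', b', t', rfl, ht', hV', hleg'⟩ := exists_leg_subset_star hε hw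
  by_cases hmem : edgeMap e' t' ∈ leg e b t
  · exact ⟨{e}, finite_singleton e, (injJoinedIn_leg_of_mem hmem).mono
      (subset_inter hleg (leg_subset_subgraph (mem_singleton _) b t))⟩
  by_cases hmem' : edgeMap e t ∈ leg e' b' t'
  · exact ⟨{e'}, finite_singleton e', (injJoinedIn_leg_of_mem hmem').symm.mono
      (subset_inter hleg' (leg_subset_subgraph (mem_singleton _) b' t'))⟩
  obtain ⟨M, hM, E, hE, hME, hMlegs, hjoined⟩ :=
    exists_injJoinedIn_vertex_vertex hV hV' hF ε (toFinite {e, e'})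
  have hlegE := leg_subset_subgraph (mem_insert e {e'}) b t
  have hlegE' := leg_subset_subgraph (mem_insert_of_mem e (mem_singleton e')) b' t'
  have h₁ : leg e b t ∩ M ⊆ {vertex (e.1 b)} := fun z hz =>
    leg_inter_range_vertex_subset ht ⟨hz.1, hMlegs ⟨hz.2, hlegE hz.1⟩⟩
  have h₂ : (leg e b t ∪ M) ∩ leg e' b' t' ⊆ {vertex (e'.1 b')} := by
    rintro z ⟨hz | hz, hz'⟩
    · exact leg_inter_range_vertex_subset ht' ⟨hz', leg_inter_leg_subset hmem hmem' ⟨hz, hz'⟩⟩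
    · exact leg_inter_range_vertex_subset ht' ⟨hz', hMlegs ⟨hz, hlegE' hz'⟩⟩
  have hjoined' :=
    ((injJoinedIn_leg e b t).trans hjoined h₁).trans (injJoinedIn_leg e' b' t').symm h₂
  refine ⟨{e, e'} ∪ E, (toFinite _).union hE, hjoined'.mono (subset_inter
    (union_subset (union_subset hleg hM) hleg') (union_subset (union_subset ?_ ?_) ?_))⟩
  · exact hlegE.trans (subgraph_mono subset_union_left)
  · exact hME.trans (subgraph_mono subset_union_right)
  · exact hlegE'.trans (subgraph_mono subset_union_left)

lemma arcwiseConnected [T1Space X] [Nontrivial X] : ArcwiseConnected (GraphExtension X) :=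
  isArcConnectedSet_univ_iff.1
    (star_univ_empty (X := X) ▸ isArcConnectedSet_star Set.univ finite_empty one_pos)

lemma locallyArcwiseConnected [T1Space X] [Nontrivial X] :
    LocallyArcwiseConnected (GraphExtension X) := by
  rintro (x | ⟨e, t⟩) U hU
  · obtain ⟨V, hV, F, ε, hF, hε, hVU⟩ := exists_star_subset hU
    exact ⟨_, star_mem_nhds hV hF hε, hVU, isArcConnectedSet_star V hF hε⟩
  · rw [← edgeMap_coe] at hU
    obtain ⟨a, b, -, hab, habU⟩ :=
      exists_Icc_mem_subset_of_mem_nhds ((continuous_edgeMap e).continuousAt.preimage_mem_nhds hU)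
    refine ⟨edgeMap e '' Icc a b, ?_, image_subset_iff.2 habU,
      isArcConnectedSet_of_injJoinedIn ?_⟩
    · refine mem_of_superset ((isOpenEmbedding_inner e).image_mem_nhds.2
        (continuous_subtype_val.continuousAt.preimage_mem_nhds hab)) ?_
      rintro _ ⟨s, hs, rfl⟩
      exact ⟨s, hs, edgeMap_coe e s⟩
    · rintro _ ⟨s, hs, rfl⟩ _ ⟨s', hs', rfl⟩ -
      exact ⟨{e}, finite_singleton e, (injJoinedIn_edgeMap e s s').mono (subset_inter
        (image_mono (ordConnected_Icc.uIcc_subset hs hs'))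
        ((image_subset_range _ _).trans (range_edgeMap_subset_subgraph (mem_singleton e))))⟩

end GraphExtension

/-! ### The two families -/

lemma exists_connected_family {κ lam : Cardinal} (hκ : ℵ₀ ≤ κ) (h₁ : κ ≤ lam) (h₂ : lam ≤ 2 ^ κ) :
    ExistsNonHomeoFamily (2 ^ lam) fun X _ => CompactSpace X ∧ T1Space X ∧ #X = κ ∧
      tweight X = lam ∧ ConnectedSpace X ∧ LocallyConnectedSpace X := by
  refine (exists_scattered_family hκ h₁ h₂).map HyperconnectedExtension
    (fun _ _ => inferInstance) ?_ ?_
  · rintro X t ⟨_, _, rfl, hw, -⟩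
    have : Infinite X := infinite_iff.2 hκ
    exact ⟨inferInstance, inferInstance, HyperconnectedExtension.mk_eq,
      (HyperconnectedExtension.tweight_eq (h₁.trans_eq hw.symm)).trans hw, inferInstance,
      locallyConnectedSpace_of_preirreducibleSpace _⟩
  · exact fun _ _ _ _ _ _ h => HyperconnectedExtension.nonempty_homeomorph h

lemma exists_arcwiseConnected_family {κ lam : Cardinal} (hκ : continuum ≤ κ) (h₁ : κ ≤ lam)
    (h₂ : lam ≤ 2 ^ κ) :
    ExistsNonHomeoFamily (2 ^ lam) fun X _ => CompactSpace X ∧ T1Space X ∧ #X = κ ∧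
      tweight X = lam ∧ ArcwiseConnected X ∧ LocallyArcwiseConnected X := by
  have huncountable {X : Type} (hX : #X = κ) : Uncountable X :=
    aleph0_lt_mk_iff.1 (aleph0_lt_continuum.trans_le (hκ.trans_eq hX.symm))
  refine (exists_scattered_family (aleph0_le_continuum.trans hκ) h₁ h₂).map GraphExtension
    (fun _ _ => inferInstance) ?_ ?_
  · rintro X t ⟨_, _, rfl, hw, -⟩
    have := huncountable (X := X) rfl
    exact ⟨inferInstance, inferInstance, GraphExtension.mk_eq hκ,
      (GraphExtension.tweight_eq hκ (h₁.trans_eq hw.symm)).trans hw,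
      GraphExtension.arcwiseConnected, GraphExtension.locallyArcwiseConnected⟩
  · rintro X t Y t' ⟨_, _, hX, -, -⟩ ⟨_, _, hY, -, -⟩ h
    have := huncountable hX
    have := huncountable hY
    exact GraphExtension.nonempty_homeomorph h

/-- Theorem 6: if `κ ≤ λ ≤ 2 ^ κ` (both infinite), then there exist two families
`C₁, C₂` of `2 ^ λ` mutually non-homeomorphic compact T₁-spaces of cardinality `κ` and
weight `λ` such that all members of `C₁` are scattered, all members of `C₂` are
connected and locally connected, and if `κ ≥ 𝔠` all members of `C₂` are moreover
arcwise connected and locally arcwise connected. -/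
theorem stmt16 (κ lam : Cardinal) (hκ : ℵ₀ ≤ κ) (h1 : κ ≤ lam) (h2 : lam ≤ 2 ^ κ) :
    ExistsNonHomeoFamily (2 ^ lam) (fun X t =>
      letI := t
      CompactSpace X ∧ T1Space X ∧ #X = κ ∧ tweight X = lam ∧ Scattered X)
    ∧ ExistsNonHomeoFamily (2 ^ lam) (fun X t =>
      letI := t
      CompactSpace X ∧ T1Space X ∧ #X = κ ∧ tweight X = lam ∧
        ConnectedSpace X ∧ LocallyConnectedSpace X ∧
        (Cardinal.continuum ≤ κ → ArcwiseConnected X ∧ LocallyArcwiseConnected X)) := by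
  refine ⟨exists_scattered_family hκ h1 h2, ?_⟩
  rcases le_or_gt continuum κ with hc | hc
  · refine (exists_arcwiseConnected_family hc h1 h2).mono ?_
    rintro X t ⟨hcompact, hT1, hmk, hw, harc, hlarc⟩
    have : Infinite X := infinite_iff.2 (hκ.trans_eq hmk.symm)
    exact ⟨hcompact, hT1, hmk, hw, harc.connectedSpace, hlarc.locallyConnectedSpace,
      fun _ => ⟨harc, hlarc⟩⟩
  · refine (exists_connected_family hκ h1 h2).mono ?_
    rintro X t ⟨hcompact, hT1, hmk, hw, hconn, hlconn⟩
    exact ⟨hcompact, hT1, hmk, hw, hconn, hlconn, fun h => absurd h hc.not_ge⟩
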